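/- Let E : y² = x³ + ax + b be an elliptic curve over ℚ (a, b ∈ ℚ with 4a³ + 27b² ≠ 0). There exists a constant C > 1, depending only on E, such that for every squarefree nonzero integer D the following holds: if P₁,…,P_N is a sequence of affine rational points on the quadratic twist E^(D) : y² = x³ + aD²x + bD³ whose x-coordinates form a non-trivial arithmetic progression, or whose y-coordinates form a non-trivial arithmetic progression, then N ≤ C^(ω(D)+1). -/

import Mathlib

/-- `u 0, …, u (N-1)` is a non-trivial arithmetic progression. -/
def IsNontrivAP {F : Type*} [Field F] {N : ℕ} (u : Fin N → F) : Prop :=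
  ∃ a b : F, b ≠ 0 ∧ ∀ i : Fin N, u i = a + (((i : ℕ) + 1 : ℕ) : F) * b

/-- The quadratic twist by `D` of the elliptic curve `y² = x³ + ax + b`,
namely `y² = x³ + aD²x + bD³`. -/
def quadTwist (a b : ℚ) (D : ℤ) : WeierstrassCurve ℚ :=
  ⟨0, 0, 0, a * (D : ℚ) ^ 2, b * (D : ℚ) ^ 3⟩

section
namespace APTwist

/-- number of elements of height at most `b` -/
noncomputable def cnt {A : Type} (h : A → ℝ) (b : ℝ) : ℕ := {P | h P ≤ b}.ncard

theorem cnt_double {A : Type} [AddCommGroup A] (h : A → ℝ) (M : ℕ) (κ : A → Fin M)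
    (h0 : ∀ P, 0 ≤ h P)
    (hpar : ∀ P Q, h (P + Q) + h (P - Q) = 2 * h P + 2 * h Q)
    (hfin : ∀ b, {P | h P ≤ b}.Finite)
    (hκ : ∀ P Q, κ P = κ Q → ∃ R, P - Q = R + R) (b : ℝ) (hb : 0 ≤ b) :
    cnt h b ≤ 2 * M * cnt h (b / 2) := by
  classical
  have hz : h 0 = 0 := by have := hpar 0 0; simp at this; linarith
  set S := (hfin b).toFinset with hS
  set S' := (hfin (b/2)).toFinset with hS'
  have e1 : cnt h b = S.card := Set.ncard_eq_toFinset_card _ (hfin b)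
  have e2 : cnt h (b/2) = S'.card := Set.ncard_eq_toFinset_card _ (hfin (b/2))
  rw [e1, e2]
  have hpos : 0 < S.card := Finset.card_pos.mpr ⟨0, by simp [hS, hz, hb]⟩
  set T := (S ×ˢ S).filter (fun p => κ p.1 = κ p.2) with hT
  -- Cauchy–Schwarz
  have hCS : S.card ^ 2 ≤ M * T.card := by
    have h1 : S.card = ∑ m : Fin M, (S.filter (fun p => κ p = m)).card :=
      Finset.card_eq_sum_card_fiberwise (fun _ _ => Finset.mem_coe.mpr (Finset.mem_univ _))
    have h2 : T.card = ∑ m : Fin M, (S.filter (fun p => κ p = m)).card ^ 2 := by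
      rw [Finset.card_eq_sum_card_fiberwise (f := fun p => κ p.1) (t := Finset.univ)
        (fun _ _ => Finset.mem_coe.mpr (Finset.mem_univ _))]
      refine Finset.sum_congr rfl fun m _ => ?_
      rw [sq, ← Finset.card_product]
      congr 1
      ext ⟨p, q⟩
      simp only [hT, Finset.mem_filter, Finset.mem_product]
      constructor
      · rintro ⟨⟨⟨a1, a2⟩, a3⟩, a4⟩
        exact ⟨⟨a1, a4⟩, a2, a3 ▸ a4⟩
      · rintro ⟨⟨a1, a2⟩, a3, a4⟩
        exact ⟨⟨⟨a1, a3⟩, a2.trans a4.symm⟩, a2⟩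
    rw [h1, h2]
    have := sq_sum_le_card_mul_sum_sq (s := (Finset.univ : Finset (Fin M)))
      (f := fun m => (S.filter (fun p => κ p = m)).card)
    simpa using this
  have hTle : T.card ≤ 2 * (S'.card * S.card) := by
    have hex : ∀ p : A × A, ∃ mq : A × A, p ∈ T → p.1 = mq.1 + mq.2 ∧ p.2 = mq.1 - mq.2 := by
      intro p
      by_cases hp : p ∈ T
      · have : κ p.1 = κ p.2 := (Finset.mem_filter.mp hp).2
        obtain ⟨R, hR⟩ := hκ _ _ this
        refine ⟨(p.1 - R, R), fun _ => ⟨by simp, ?_⟩⟩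
        have : p.2 = p.1 - (R + R) := by rw [← hR]; abel
        rw [this]; simp only; abel
      · exact ⟨0, fun h => absurd h hp⟩
    choose g hg using hex
    have himg : T.card ≤ ((S' ×ˢ S) ∪ (S ×ˢ S')).card := by
      apply Finset.card_le_card_of_injOn g
      · intro p hp
        obtain ⟨g1, g2⟩ := hg p hp
        have hp' := Finset.mem_product.mp (Finset.mem_filter.mp hp).1
        have a1 : h p.1 ≤ b := by simpa [hS] using hp'.1
        have a2 : h p.2 ≤ b := by simpa [hS] using hp'.2
        rw [g1] at a1; rw [g2] at a2
        have := hpar (g p).1 (g p).2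
        have n1 := h0 (g p).1
        have n2 := h0 (g p).2
        simp only [Finset.coe_union, Set.mem_union, Finset.mem_coe, Finset.mem_product, hS, hS',
          Set.Finite.mem_toFinset, Set.mem_ofPred_eq]
        by_cases hc : h (g p).1 ≤ b / 2
        · left; exact ⟨hc, by linarith⟩
        · right; push Not at hc; exact ⟨by linarith, by linarith⟩
      · intro p hp q hq hpq
        obtain ⟨g1, g2⟩ := hg p hp
        obtain ⟨g3, g4⟩ := hg q hq
        rw [hpq] at g1 g2
        exact Prod.ext (g1.trans g3.symm) (g2.trans g4.symm)
    refine himg.trans ((Finset.card_union_le _ _).trans ?_)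
    simp only [Finset.card_product]
    nlinarith
  have : S.card * S.card ≤ (2 * M * S'.card) * S.card := by nlinarith
  exact Nat.le_of_mul_le_mul_right this hpos

theorem cnt_iter {A : Type} [AddCommGroup A] (h : A → ℝ) (M : ℕ) (κ : A → Fin M)
    (h0 : ∀ P, 0 ≤ h P)
    (hpar : ∀ P Q, h (P + Q) + h (P - Q) = 2 * h P + 2 * h Q)
    (hfin : ∀ b, {P | h P ≤ b}.Finite)
    (hκ : ∀ P Q, κ P = κ Q → ∃ R, P - Q = R + R) (k : ℕ) (b : ℝ) (hb : 0 ≤ b) :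
    cnt h b ≤ (2 * M) ^ k * cnt h (b / 2 ^ k) := by
  induction k with
  | zero => simp
  | succ k ih =>
    refine ih.trans ?_
    have := cnt_double h M κ h0 hpar hfin hκ (b / 2 ^ k) (by positivity)
    rw [div_div, ← pow_succ] at this
    calc _ ≤ (2 * M) ^ k * (2 * M * cnt h (b / 2 ^ (k+1))) := Nat.mul_le_mul_left _ this
      _ = _ := by ring

theorem cnt_mono {A : Type} (h : A → ℝ) (hfin : ∀ b, {P | h P ≤ b}.Finite) {b b' : ℝ}
    (hbb : b ≤ b') : cnt h b ≤ cnt h b' :=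
  Set.ncard_le_ncard (fun _ hP => le_trans hP hbb) (hfin b')

theorem abstract_exact (c : ℝ) (hc : 1 ≤ c) : ∃ C : ℝ, 1 ≤ C ∧ ∃ k : ℕ,
    ∀ (A : Type) [AddCommGroup A] (h : A → ℝ) (M : ℕ) (κ : A → Fin M)
    (_ : ∀ P, 0 ≤ h P)
    (_ : ∀ P Q, h (P + Q) + h (P - Q) = 2 * h P + 2 * h Q)
    (_ : ∀ b, {P | h P ≤ b}.Finite)
    (_ : ∀ b, 0 ≤ b → (cnt h b : ℝ) ≤ c * Real.exp (c * b))
    (_ : ∀ P Q, κ P = κ Q → ∃ R, P - Q = R + R)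
    (N : ℕ) (P : Fin N → A) (_ : Function.Injective P)
    (_ : ∀ i j k, i ≠ j → j ≠ k → i ≠ k →
      h (P k) ≤ c * (h (P i) + h (P j) + (Real.log N + 1)))
    (_ : ∀ i j k, i ≠ j → j ≠ k → i ≠ k →
      h (P i) ≤ c * (h (P j - P i) + h (P k - P i) + (Real.log N + 1))),
    (N : ℝ) ≤ C * (M : ℝ) ^ k := by
  classical
  obtain ⟨k, hk⟩ := pow_unbounded_of_one_lt (224 * c ^ 3) (one_lt_two : (1:ℝ) < 2)
  refine ⟨(2:ℝ) ^ (2 * k) * c ^ 2 * Real.exp 1 + 3 * 2 ^ k, ?_, 2 * k, ?_⟩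
  · have : (1:ℝ) ≤ 2 ^ k := one_le_pow₀ (by norm_num)
    have : (0:ℝ) ≤ (2:ℝ) ^ (2 * k) * c ^ 2 * Real.exp 1 := by positivity
    linarith
  intro A _ h M κ h0 hpar hfin hcount hκ N P hinj H1 H2
  have hM : 1 ≤ M := Fin.pos (κ 0)
  have hMr : (1:ℝ) ≤ M := by exact_mod_cast hM
  have hMk : (1:ℝ) ≤ (M:ℝ) ^ k := one_le_pow₀ hMr
  have hMk2 : (M:ℝ) ^ k ≤ (M:ℝ) ^ (2 * k) := pow_le_pow_right₀ hMr (by omega)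
  have h2k : (1:ℝ) ≤ 2 ^ k := one_le_pow₀ (by norm_num)
  have hpos1 : (0:ℝ) ≤ (2:ℝ) ^ (2 * k) * c ^ 2 * Real.exp 1 * (M:ℝ) ^ (2 * k) := by positivity
  -- trivial case
  suffices hmain : (N:ℝ) ≤ 2 ^ (2 * k) * c ^ 2 * Real.exp 1 * (M:ℝ) ^ (2 * k) ∨
      (N:ℝ) ≤ 3 * 2 ^ k * (M:ℝ) ^ k by
    have hpos2 : 3 * 2 ^ k * (M:ℝ) ^ k ≤ 3 * 2 ^ k * (M:ℝ) ^ (2 * k) := by gcongr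
    have hpos3 : 0 ≤ 3 * 2 ^ k * (M:ℝ) ^ (2 * k) := by positivity
    rw [add_mul]
    rcases hmain with h | h <;> linarith
  by_cases hN : N < 3
  · right
    have : (N:ℝ) ≤ 2 := by exact_mod_cast (by omega : N ≤ 2)
    have h3 : (1:ℝ) ≤ 2 ^ k * (M:ℝ) ^ k := one_le_mul_of_one_le_of_one_le h2k hMk
    nlinarith
  have hN3 : 3 ≤ N := by omega
  have hN1 : (1:ℝ) ≤ N := by exact_mod_cast (by omega : 1 ≤ N)
  set L := Real.log N + 1 with hL
  have hL1 : 1 ≤ L := by have := Real.log_nonneg hN1; linarith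
  have : Nonempty (Fin N) := ⟨⟨0, by omega⟩⟩
  obtain ⟨i1, -, hi1⟩ := Finset.exists_min_image (Finset.univ : Finset (Fin N)) (fun i => h (P i))
    Finset.univ_nonempty
  have hI : (Finset.univ.erase i1 : Finset (Fin N)).card = N - 1 := by
    rw [Finset.card_erase_of_mem (Finset.mem_univ _)]; simp
  obtain ⟨i2, hi2m, hi2⟩ := Finset.exists_min_image (Finset.univ.erase i1) (fun i => h (P i))
    (Finset.card_pos.mp (by omega))
  have hne : i1 ≠ i2 := (Finset.ne_of_mem_erase hi2m).symm
  have h12 : h (P i1) ≤ h (P i2) := hi1 _ (Finset.mem_univ _)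
  have hup : ∀ j, h (P j) ≤ c * (2 * h (P i2) + L) := by
    intro j
    have hx := h0 (P i2)
    by_cases hj1 : j = i1
    · subst hj1; nlinarith
    by_cases hj2 : j = i2
    · subst hj2; nlinarith
    have := H1 i1 i2 j hne (Ne.symm hj2) (Ne.symm hj1)
    nlinarith
  by_cases hcase : h (P i2) ≤ 4 * c * L
  · -- case A
    left
    set B := c * (8 * c + 1) * L with hB
    have hB0 : 0 ≤ B := by positivity
    have hall : ∀ j, h (P j) ≤ B := fun j => (hup j).trans (by rw [hB]; nlinarith)
    have n1 : N ≤ cnt h B := by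
      have := Set.ncard_le_ncard (s := Set.range P) (t := {Q | h Q ≤ B})
        (by rintro _ ⟨j, rfl⟩; exact hall j) (hfin B)
      rw [← Set.image_univ, Set.ncard_image_of_injective _ hinj, Set.ncard_univ] at this
      simpa [cnt] using this
    have n2 := cnt_iter h M κ h0 hpar hfin hκ k B hB0
    have n3 := hcount (B / 2 ^ k) (by positivity)
    have n4 : (N:ℝ) ≤ (2 * M) ^ k * (c * Real.exp (L / 2)) := by
      have a1 : (N:ℝ) ≤ (2 * M) ^ k * (cnt h (B / 2 ^ k) : ℝ) := by exact_mod_cast n1.trans n2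
      refine a1.trans ?_
      gcongr
      refine n3.trans ?_
      gcongr
      rw [← mul_div_assoc, div_le_div_iff₀ (by positivity) (by norm_num)]
      have : 18 * c ^ 3 ≤ 2 ^ k := by nlinarith [pow_pos (by linarith : 0 < c) 3]
      have c2 : c ^ 2 ≤ c ^ 3 := pow_le_pow_right₀ hc (by norm_num)
      calc c * B * 2 = (16 * c ^ 3 + 2 * c ^ 2) * L := by rw [hB]; ring
        _ ≤ 2 ^ k * L := by gcongr; linarith
        _ = _ := by ring
    have n5 : (N:ℝ) * N ≤ ((2 * M) ^ k * (c * Real.exp (L / 2))) ^ 2 := by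
      rw [← sq]; gcongr
    have n6 : ((2 * M) ^ k * (c * Real.exp (L / 2))) ^ 2 =
        (2 ^ (2 * k) * c ^ 2 * Real.exp 1 * (M:ℝ) ^ (2 * k)) * N := by
      have : Real.exp (L / 2) ^ 2 = Real.exp 1 * N := by
        rw [← Real.exp_nat_mul]
        have : ((2:ℕ):ℝ) * (L / 2) = 1 + Real.log N := by rw [hL]; push_cast; ring
        rw [this, Real.exp_add, Real.exp_log (by linarith)]
      rw [mul_pow, mul_pow c, this, mul_pow, mul_pow, ← pow_mul, ← pow_mul, mul_comm k 2]; ring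
    rw [n6] at n5
    exact le_of_mul_le_mul_right n5 (by linarith)
  · right
    push Not at hcase
    set H := h (P i2) with hH
    have hH0 : 0 < H := by nlinarith
    have hLH : L ≤ H := by nlinarith
    set ε := 1 / (8 * c) with hε
    have hε0 : 0 < ε := by positivity
    have hcε : c * ε = 1 / 8 := by rw [hε]; field_simp
    have hε1 : ε ≤ 1 := by nlinarith
    have hup' : ∀ j, h (P j) ≤ 3 * c * H := fun j => (hup j).trans (by nlinarith)
    have hlow : ∀ j, j ≠ i1 → H ≤ h (P j) := fun j hj =>
      hi2 j (Finset.mem_erase.mpr ⟨hj, Finset.mem_univ _⟩)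
    have hno : ∀ i j l, i ≠ i1 → i ≠ j → j ≠ l → i ≠ l → h (P j - P i) ≤ ε * H →
        h (P l - P i) ≤ ε * H → False := by
      intro i j l hi hij hjl hil b1 b2
      have := H2 i j l hij hjl hil
      have hl := hlow i hi
      have : H ≤ c * (ε * H + ε * H + L) := hl.trans (this.trans (by gcongr))
      have e1 : c * (ε * H + ε * H + L) = 2 * (c * ε) * H + c * L := by ring
      rw [e1, hcε] at this
      nlinarith
    have hsub : ∀ P Q, h (P - Q) ≤ 2 * h P + 2 * h Q := fun P Q => by
      have := hpar P Q; have := h0 (P + Q); linarith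
    have hadd : ∀ P Q, h (P + Q) ≤ 2 * h P + 2 * h Q := fun P Q => by
      have := hpar P Q; have := h0 (P - Q); linarith
    set I := (Finset.univ.erase i1 : Finset (Fin N)) with hIdef
    set S := (hfin (ε * H / 4)).toFinset with hS
    set U := (hfin (7 * c * H)).toFinset with hU
    have eS : cnt h (ε * H / 4) = S.card := Set.ncard_eq_toFinset_card _ (hfin _)
    have eU : cnt h (7 * c * H) = U.card := Set.ncard_eq_toFinset_card _ (hfin _)
    have hz : h 0 = 0 := by have := hpar 0 0; simp at this; linarith
    have hSpos : 0 < S.card := Finset.card_pos.mpr ⟨0, by simp [hS, hz]; positivity⟩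
    have key : (I ×ˢ S).card ≤ 2 * U.card := by
      apply Finset.card_le_mul_card_image_of_maps_to (f := fun p => P p.1 + p.2)
      · rintro ⟨j, q⟩ hp
        have hp := Finset.mem_product.mp hp
        have hq : h q ≤ ε * H / 4 := by simpa [hS] using hp.2
        simp only [hU, Set.Finite.mem_toFinset, Set.mem_ofPred_eq]
        have := hadd (P j) q
        have := hup' j
        nlinarith
      · intro u hu
        by_contra hcon
        push Not at hcon
        obtain ⟨⟨j1, q1⟩, ⟨j2, q2⟩, ⟨j3, q3⟩, m1, m2, m3, d12, d13, d23⟩ :=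
          Finset.two_lt_card_iff.mp hcon
        simp only [Finset.mem_filter, Finset.mem_product, hS, Set.Finite.mem_toFinset,
          Set.mem_ofPred_eq] at m1 m2 m3
        obtain ⟨⟨mi1, mq1⟩, e1⟩ := m1
        obtain ⟨⟨mi2, mq2⟩, e2⟩ := m2
        obtain ⟨⟨mi3, mq3⟩, e3⟩ := m3
        have hd : ∀ {j q j' q'}, P j + q = u → P j' + q' = u → (j, q) ≠ (j', q') → j ≠ j' := by
          intro j q j' q' a1 a2 hn hj
          subst hj
          exact hn (by rw [add_left_cancel (a1.trans a2.symm)])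
        refine hno j1 j2 j3 (Finset.ne_of_mem_erase mi1) (hd e1 e2 d12) (hd e2 e3 d23)
          (hd e1 e3 d13) ?_ ?_
        · have : P j2 - P j1 = q1 - q2 := by
            rw [sub_eq_sub_iff_add_eq_add, e2, ← e1, add_comm]
          rw [this]; linarith [hsub q1 q2]
        · have : P j3 - P j1 = q1 - q3 := by
            rw [sub_eq_sub_iff_add_eq_add, e3, ← e1, add_comm]
          rw [this]; linarith [hsub q1 q3]
    have hUle : U.card ≤ (2 * M) ^ k * S.card := by
      rw [← eU, ← eS]
      refine (cnt_iter h M κ h0 hpar hfin hκ k (7 * c * H) (by positivity)).trans ?_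
      refine Nat.mul_le_mul_left _ (cnt_mono h hfin ?_)
      rw [div_le_iff₀ (by positivity)]
      have e : 7 * c * H = (c * ε) * (56 * c * H) := by rw [hcε]; ring
      rw [e]
      have c12 : c ≤ c ^ 3 := by nlinarith [sq_nonneg (c-1), mul_nonneg (by linarith : 0 ≤ c) (by nlinarith : (0:ℝ) ≤ c^2-1)]
      have hc2 : c ^ 2 ≤ c ^ 3 := pow_le_pow_right₀ hc (by norm_num)
      calc c * ε * (56 * c * H) = ε * H / 4 * (224 * c ^ 2) := by ring
        _ ≤ ε * H / 4 * 2 ^ k := by gcongr; linarith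
    rw [Finset.card_product, hI] at key
    have : (N - 1) * S.card ≤ (2 * (2 * M) ^ k) * S.card := by
      calc _ ≤ _ := key
        _ ≤ 2 * ((2 * M) ^ k * S.card) := by gcongr
        _ = _ := by ring
    have h5 : N - 1 ≤ 2 * (2 * M) ^ k := Nat.le_of_mul_le_mul_right this hSpos
    have h6 : 1 ≤ (2 * M) ^ k := Nat.one_le_pow _ _ (by omega)
    have h7 : N ≤ 3 * (2 * M) ^ k := by omega
    have h8 : (N:ℝ) ≤ 3 * (2 * (M:ℝ)) ^ k := by exact_mod_cast h7
    rw [mul_pow, ← mul_assoc] at h8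
    exact h8

end APTwist

end

section
namespace APTwist

theorem exists_canonical {A : Type} [AddCommGroup A] (c : ℝ) (h : A → ℝ)
    (h0 : ∀ P, 0 ≤ h P)
    (hpar : ∀ P Q, |h (P + Q) + h (P - Q) - 2 * h P - 2 * h Q| ≤ c) :
    ∃ g : A → ℝ, (∀ P, 0 ≤ g P) ∧ (∀ P Q, g (P + Q) + g (P - Q) = 2 * g P + 2 * g Q) ∧
      ∀ P, |g P - h P| ≤ c := by
  have hc0 : 0 ≤ c := (abs_nonneg _).trans (hpar 0 0)
  have hzero : h 0 ≤ c / 2 := by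
    have := abs_le.mp (hpar 0 0); simp at this; linarith
  have hdup : ∀ P, |h ((2:ℕ) • P) - 4 * h P| ≤ 3 / 2 * c := by
    intro P
    have h1 := abs_le.mp (hpar P P)
    rw [sub_self] at h1
    rw [two_nsmul, abs_le]
    have := h0 0
    constructor <;> linarith
  let f : A → ℕ → ℝ := fun P n => h ((2 ^ n : ℕ) • P) / 4 ^ n
  have hf : ∀ P n, dist (f P n) (f P (n + 1)) ≤ (c / 2) * (1 / 4) ^ n := by
    intro P n
    have := hdup ((2 ^ n : ℕ) • P)
    rw [smul_smul, ← pow_succ'] at this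
    rw [dist_comm, Real.dist_eq]
    have e : f P (n + 1) - f P n =
        (h ((2 ^ (n + 1) : ℕ) • P) - 4 * h ((2 ^ n : ℕ) • P)) / 4 ^ (n + 1) := by
      simp only [f]; field_simp; ring
    rw [e, abs_div, abs_of_pos (by positivity : (0:ℝ) < 4 ^ (n + 1)), div_le_iff₀ (by positivity)]
    refine this.trans ?_
    have : c / 2 * (1 / 4) ^ n * 4 ^ (n + 1) = 2 * c := by
      rw [pow_succ, div_pow]; field_simp; norm_num
    rw [this]; linarith
  have hlim : ∀ P, ∃ l, Filter.Tendsto (f P) Filter.atTop (nhds l) := fun P =>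
    cauchySeq_tendsto_of_complete (cauchySeq_of_le_geometric _ _ (by norm_num) (hf P))
  choose g hg using hlim
  refine ⟨g, fun P => ge_of_tendsto' (hg P) (fun n => div_nonneg (h0 _) (by positivity)),
    fun P Q => ?_, fun P => ?_⟩
  · have t1 : Filter.Tendsto (fun n => f (P + Q) n + f (P - Q) n - 2 * f P n - 2 * f Q n)
        Filter.atTop (nhds (g (P + Q) + g (P - Q) - 2 * g P - 2 * g Q)) :=
      (((hg _).add (hg _)).sub ((hg P).const_mul 2)).sub ((hg Q).const_mul 2)
    have t2 : Filter.Tendsto (fun n => f (P + Q) n + f (P - Q) n - 2 * f P n - 2 * f Q n)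
        Filter.atTop (nhds 0) := by
      apply squeeze_zero_norm (a := fun n : ℕ => c * (1 / 4) ^ n)
      · intro n
        have := hpar ((2 ^ n : ℕ) • P) ((2 ^ n : ℕ) • Q)
        rw [← smul_add, ← smul_sub] at this
        have e : f (P + Q) n + f (P - Q) n - 2 * f P n - 2 * f Q n =
          (h ((2 ^ n : ℕ) • (P + Q)) + h ((2 ^ n : ℕ) • (P - Q)) - 2 * h ((2 ^ n : ℕ) • P)
            - 2 * h ((2 ^ n : ℕ) • Q)) * (1 / 4) ^ n := by
          simp only [f, div_pow, one_pow]; ring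
        rw [e, Real.norm_eq_abs, abs_mul, abs_of_pos (by positivity : (0:ℝ) < (1/4) ^ n)]
        gcongr
      · have := (tendsto_pow_atTop_nhds_zero_of_lt_one (r := (1/4:ℝ)) (by norm_num)
          (by norm_num)).const_mul c
        simpa using this
    have := tendsto_nhds_unique t1 t2
    linarith
  · have := dist_le_of_le_geometric_of_tendsto₀ _ _ (by norm_num) (hf P) (hg P)
    rw [dist_comm, Real.dist_eq] at this
    simp only [f, pow_zero, one_smul, div_one] at this
    refine this.trans ?_
    rw [div_le_iff₀ (by norm_num)]
    linarith

theorem abstract_approx (c : ℝ) (hc : 1 ≤ c) : ∃ C : ℝ, 1 ≤ C ∧ ∃ k : ℕ,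
    ∀ (A : Type) [AddCommGroup A] (h : A → ℝ) (M : ℕ) (κ : A → Fin M)
    (_ : ∀ P, 0 ≤ h P)
    (_ : ∀ P Q, |h (P + Q) + h (P - Q) - 2 * h P - 2 * h Q| ≤ c)
    (_ : ∀ b, {P | h P ≤ b}.Finite)
    (_ : ∀ b, 0 ≤ b → (cnt h b : ℝ) ≤ c * Real.exp (c * b))
    (_ : ∀ P Q, κ P = κ Q → ∃ R, P - Q = R + R)
    (N : ℕ) (P : Fin N → A) (_ : Function.Injective P)
    (_ : ∀ i j k, i ≠ j → j ≠ k → i ≠ k →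
      h (P k) ≤ c * (h (P i) + h (P j) + (Real.log N + 1)))
    (_ : ∀ i j k, i ≠ j → j ≠ k → i ≠ k →
      h (P i) ≤ c * (h (P j - P i) + h (P k - P i) + (Real.log N + 1))),
    (N : ℝ) ≤ C * (M : ℝ) ^ k := by
  set c' := c * Real.exp (c ^ 2) + (2 * c ^ 2 + 2 * c) with hc'
  have hE : 0 ≤ c * Real.exp (c ^ 2) := by positivity
  have hcc : c ≤ c' := by nlinarith
  obtain ⟨C, hC, k, hk⟩ := abstract_exact c' (hc.trans hcc)
  refine ⟨C, hC, k, ?_⟩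
  intro A _ h M κ h0 hpar hfin hcount hκ N P hinj H1 H2
  obtain ⟨g, g0, gpar, gh⟩ := exists_canonical c h h0 hpar
  have g1 : ∀ P, g P ≤ h P + c := fun P => by have := abs_le.mp (gh P); linarith
  have g2 : ∀ P, h P ≤ g P + c := fun P => by have := abs_le.mp (gh P); linarith
  have hsub : ∀ b, {P | g P ≤ b} ⊆ {P | h P ≤ b + c} := fun b P (hP : g P ≤ b) =>
    show h P ≤ b + c by linarith [g2 P]
  have hlog : 0 ≤ Real.log N := Real.log_natCast_nonneg N
  have key : ∀ x y z : A, h x ≤ c * (h y + h z + (Real.log N + 1)) →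
      g x ≤ c' * (g y + g z + (Real.log N + 1)) := by
    intro x y z hx
    have a1 := g1 x
    have a2 := g2 y
    have a3 := g2 z
    have a4 := g0 y
    have a5 := g0 z
    have : g x ≤ c * (g y + c + (g z + c) + (Real.log N + 1)) + c :=
      a1.trans (by gcongr; exact hx.trans (by gcongr))
    refine this.trans ?_
    set L := Real.log N + 1
    have hL : 1 ≤ L := by simp only [L]; linarith
    have : c * (g y + c + (g z + c) + L) + c ≤ (2 * c ^ 2 + 2 * c) * (g y + g z + L) := by
      nlinarith [mul_nonneg (by positivity : 0 ≤ 2 * c ^ 2 + c) (by linarith : 0 ≤ g y + g z),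
        mul_nonneg (by positivity : 0 ≤ 2 * c ^ 2 + c) (by linarith : 0 ≤ L - 1)]
    refine this.trans ?_
    gcongr
    linarith
  refine hk A g M κ g0 gpar (fun b => (hfin _).subset (hsub b)) (fun b hb => ?_) hκ N P hinj
    (fun i j k a1 a2 a3 => key _ _ _ (H1 i j k a1 a2 a3))
    (fun i j k a1 a2 a3 => key _ _ _ (H2 i j k a1 a2 a3))
  have m1 : (cnt g b : ℝ) ≤ cnt h (b + c) := by
    exact_mod_cast Set.ncard_le_ncard (hsub b) (hfin _)
  refine m1.trans ((hcount (b + c) (by linarith)).trans ?_)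
  have : c * Real.exp (c * (b + c)) = c * Real.exp (c ^ 2) * Real.exp (c * b) := by
    rw [mul_assoc, ← Real.exp_add]; ring_nf
  rw [this]
  have : Real.exp (c * b) ≤ Real.exp (c' * b) := Real.exp_le_exp.mpr (by gcongr)
  calc _ ≤ c * Real.exp (c ^ 2) * Real.exp (c' * b) := by gcongr
    _ ≤ _ := by gcongr; nlinarith

end APTwist

end

section
namespace APTwist

open WeierstrassCurve WeierstrassCurve.Affine Height

/-- The affine model of the twist. -/
abbrev TW (a b : ℚ) (D : ℤ) : WeierstrassCurve.Affine ℚ := (quadTwist a b D).toAffine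

theorem tw_eq {a b : ℚ} {D : ℤ} {x y : ℚ} :
    (TW a b D).Equation x y ↔ y ^ 2 = x ^ 3 + a * D ^ 2 * x + b * D ^ 3 := by
  rw [Affine.equation_iff]
  simp [quadTwist]

theorem tw_negY {a b : ℚ} {D : ℤ} (x y : ℚ) : (TW a b D).negY x y = -y := by
  simp [Affine.negY, quadTwist]

theorem tw_nonsing {a b : ℚ} (hab : 4 * a ^ 3 + 27 * b ^ 2 ≠ 0) {D : ℤ} (hD : D ≠ 0) {x y : ℚ} :
    (TW a b D).Nonsingular x y ↔ y ^ 2 = x ^ 3 + a * D ^ 2 * x + b * D ^ 3 := by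
  rw [← tw_eq]
  constructor
  · exact fun h => h.1
  · intro h
    refine (Affine.equation_iff_nonsingular_of_Δ_ne_zero ?_).mp h
    have hD' : (D:ℚ) ≠ 0 := by exact_mod_cast hD
    have : (TW a b D).Δ = -16 * (D:ℚ) ^ 6 * (4 * a ^ 3 + 27 * b ^ 2) := by
      simp [quadTwist, WeierstrassCurve.Δ, WeierstrassCurve.b₂, WeierstrassCurve.b₄,
        WeierstrassCurve.b₆, WeierstrassCurve.b₈]
      ring
    rw [this]
    simp [hD', hab]

theorem tw_add_of_X_ne {a b : ℚ} {D : ℤ} {x₁ y₁ x₂ y₂ : ℚ} (h₁ : (TW a b D).Nonsingular x₁ y₁)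
    (h₂ : (TW a b D).Nonsingular x₂ y₂) (hx : x₁ ≠ x₂) :
    ∃ h₃, (Point.some x₁ y₁ h₁ + Point.some x₂ y₂ h₂ : (TW a b D).Point) =
      Point.some (((y₁ - y₂) / (x₁ - x₂)) ^ 2 - x₁ - x₂)
        (-((y₁ - y₂) / (x₁ - x₂) * (((y₁ - y₂) / (x₁ - x₂)) ^ 2 - x₁ - x₂ - x₁) + y₁)) h₃ := by
  have e := Point.add_of_X_ne (h₁ := h₁) (h₂ := h₂) hx
  have hX : (TW a b D).addX x₁ x₂ ((TW a b D).slope x₁ x₂ y₁ y₂) =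
      ((y₁ - y₂) / (x₁ - x₂)) ^ 2 - x₁ - x₂ := by
    rw [Affine.slope_of_X_ne hx]; simp [Affine.addX, quadTwist]
  have hY : (TW a b D).addY x₁ x₂ y₁ ((TW a b D).slope x₁ x₂ y₁ y₂) =
      (-((y₁ - y₂) / (x₁ - x₂) * (((y₁ - y₂) / (x₁ - x₂)) ^ 2 - x₁ - x₂ - x₁) + y₁)) := by
    rw [Affine.addY, tw_negY, Affine.negAddY, hX, Affine.slope_of_X_ne hx]
  rw [e]
  have h3 := Affine.nonsingular_add h₁ h₂ (fun h => hx h.1)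
  rw [hX, hY] at h3
  refine ⟨h3, ?_⟩
  simp only [hX, hY]

theorem tw_double {a b : ℚ} {D : ℤ} {x y : ℚ} (h : (TW a b D).Nonsingular x y)
    (hy : y ≠ 0) :
    ∃ h₃, (Point.some x y h + Point.some x y h : (TW a b D).Point) =
      Point.some (((3 * x ^ 2 + a * D ^ 2) / (2 * y)) ^ 2 - x - x)
        (-((3 * x ^ 2 + a * D ^ 2) / (2 * y) *
          (((3 * x ^ 2 + a * D ^ 2) / (2 * y)) ^ 2 - x - x - x) + y)) h₃ := by
  have hne : y ≠ (TW a b D).negY x y := by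
    rw [tw_negY]; intro h; apply hy; linarith
  have e := Point.add_self_of_Y_ne (h₁ := h) hne
  have hs : (TW a b D).slope x x y y = (3 * x ^ 2 + a * D ^ 2) / (2 * y) := by
    rw [Affine.slope_of_Y_ne rfl hne, tw_negY]; simp [quadTwist]; ring
  have hX : (TW a b D).addX x x ((TW a b D).slope x x y y) =
      ((3 * x ^ 2 + a * D ^ 2) / (2 * y)) ^ 2 - x - x := by
    rw [hs]; simp [Affine.addX, quadTwist]
  have hY : (TW a b D).addY x x y ((TW a b D).slope x x y y) =
      (-((3 * x ^ 2 + a * D ^ 2) / (2 * y) *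
          (((3 * x ^ 2 + a * D ^ 2) / (2 * y)) ^ 2 - x - x - x) + y)) := by
    rw [Affine.addY, tw_negY, Affine.negAddY, hX, hs]
  rw [e]
  have h3 := Affine.nonsingular_add h h (fun h => hne h.2)
  rw [hX, hY] at h3
  refine ⟨h3, ?_⟩
  simp only [hX, hY]

theorem tw_neg {a b : ℚ} {D : ℤ} {x y : ℚ} (h : (TW a b D).Nonsingular x y) :
    ∃ h', (-Point.some x y h : (TW a b D).Point) = Point.some x (-y) h' := by
  have h3 := (Affine.nonsingular_neg x y).mpr h
  rw [tw_negY] at h3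
  refine ⟨h3, ?_⟩
  rw [Point.neg_some]
  simp only [tw_negY]

/-- projective `x`-coordinate in the model `D y² = x³ + a x + b` -/
noncomputable def tx {a b : ℚ} {D : ℤ} : (TW a b D).Point → Fin 2 → ℚ
  | .zero => ![1, 0]
  | .some x _ _ => ![x / D, 1]

theorem tx_zero {a b : ℚ} {D : ℤ} : tx (0 : (TW a b D).Point) = ![1, 0] := rfl

theorem tx_some {a b : ℚ} {D : ℤ} {x y : ℚ} (h : (TW a b D).Nonsingular x y) :
    tx (Point.some x y h) = ![x / D, 1] := rfl

theorem tx_ne {a b : ℚ} {D : ℤ} (P : (TW a b D).Point) : ![tx P 0, tx P 1] ≠ 0 := by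
  intro h
  have h0 := congrFun h 0
  have h1 := congrFun h 1
  rcases P with _ | ⟨x, y, h⟩
  · simp [tx] at h0
  · simp [tx] at h1

theorem tx_neg {a b : ℚ} {D : ℤ} (P : (TW a b D).Point) : tx (-P) = tx P := by
  rcases P with _ | ⟨x, y, h⟩
  · rfl
  · obtain ⟨h', e⟩ := tw_neg h
    rw [e, tx_some, tx_some]

/-- the height on the twist -/
noncomputable def th {a b : ℚ} {D : ℤ} (P : (TW a b D).Point) : ℝ := logHeight (tx P)

theorem th_nonneg {a b : ℚ} {D : ℤ} (P : (TW a b D).Point) : 0 ≤ th P := logHeight_nonneg _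

theorem th_some {a b : ℚ} {D : ℤ} {x y : ℚ} (h : (TW a b D).Nonsingular x y) :
    th (Point.some x y h) = logHeight₁ (x / D) := by
  rw [th, tx_some, logHeight₁_eq_logHeight]

theorem th_zero {a b : ℚ} {D : ℤ} : th (0 : (TW a b D).Point) = 0 := by
  rw [th, tx_zero, logHeight_swap, ← logHeight₁_eq_logHeight, logHeight₁_zero]

noncomputable def s2 {a b : ℚ} {D : ℤ} (P Q : (TW a b D).Point) : Fin 3 → ℚ :=
  ![tx P 0 * tx Q 0, tx P 0 * tx Q 1 + tx P 1 * tx Q 0, tx P 1 * tx Q 1]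

theorem s2_comm {a b : ℚ} {D : ℤ} (P Q : (TW a b D).Point) : s2 P Q = s2 Q P := by
  simp only [s2]; congr 1; · ring
  congr 1; · ring
  congr 1; · ring

theorem eval_addSub (a b : ℚ) (v : Fin 3 → ℚ) :
    (fun i => MvPolynomial.eval v (addSubMap (⟨0, 0, 0, a, b⟩ : WeierstrassCurve ℚ) i)) =
    ![v 0 ^ 2 - 2 * a * v 0 * v 2 - 4 * b * v 1 * v 2 + a ^ 2 * v 2 ^ 2,
      2 * v 1 * v 0 + 2 * a * v 1 * v 2 + 4 * b * v 2 ^ 2, v 1 ^ 2 - 4 * v 0 * v 2] := by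
  ext i
  fin_cases i
  · simp [addSubMap, WeierstrassCurve.b₄, WeierstrassCurve.b₆, WeierstrassCurve.b₈]
  · simp [addSubMap, WeierstrassCurve.b₄, WeierstrassCurve.b₆, WeierstrassCurve.b₂]
  · simp [addSubMap]

theorem s2_self_aux {a b : ℚ} {D : ℤ} (hD : D ≠ 0) (P : (TW a b D).Point) :
    ∃ t : ℚ, t ≠ 0 ∧
    (fun i => MvPolynomial.eval (s2 P P) (addSubMap (⟨0, 0, 0, a, b⟩ : WeierstrassCurve ℚ) i)) =
      t • s2 (P + P) 0 := by
  have hD' : (D:ℚ) ≠ 0 := by exact_mod_cast hD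
  rw [eval_addSub]
  rcases P with _ | ⟨x, y, h⟩
  · refine ⟨1, one_ne_zero, ?_⟩
    change _ = 1 • s2 ((0 : (TW a b D).Point) + 0) 0
    rw [add_zero]
    simp only [s2, tx_zero]
    ext i; fin_cases i <;> simp [s2, tx]
  · by_cases hy : y = 0
    · have e : (Point.some x y h + Point.some x y h : (TW a b D).Point) = 0 :=
        Point.add_self_of_Y_eq (by rw [tw_negY, hy]; simp)
      have heq := tw_eq.mp h.1
      rw [hy] at heq
      have hnz : (3 * x ^ 2 + a * D ^ 2) ≠ 0 := by
        have := (Affine.nonsingular_iff x y).mp h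
        intro h0
        apply this.2.elim
        · intro hh; apply hh; simp [quadTwist]; linarith
        · intro hh; apply hh; simp [quadTwist, hy]
      refine ⟨(3 * x ^ 2 + a * D ^ 2) ^ 2 / D ^ 4, by positivity, ?_⟩
      rw [e]
      ext i; fin_cases i
      · simp [s2, tx]
        field_simp
        linear_combination (8 * x) * heq
      · simp [s2, tx]
        field_simp
        linear_combination (-4) * heq
      · simp [s2, tx]; ring
    · obtain ⟨h3, e⟩ := tw_double h hy
      have heq := tw_eq.mp h.1
      rw [e]
      refine ⟨4 * y ^ 2 / D ^ 3, by positivity, ?_⟩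
      ext i; fin_cases i
      · simp [s2, tx]
        field_simp
        linear_combination (32 * x) * heq
      · simp [s2, tx]
        field_simp
        linear_combination (-4) * heq
      · simp [s2, tx]; ring

theorem s2_aux {a b : ℚ} {D : ℤ} (hD : D ≠ 0) (P Q : (TW a b D).Point) :
    ∃ t : ℚ, t ≠ 0 ∧
    (fun i => MvPolynomial.eval (s2 P Q) (addSubMap (⟨0, 0, 0, a, b⟩ : WeierstrassCurve ℚ) i)) =
      t • s2 (P + Q) (P - Q) := by
  have hD' : (D:ℚ) ≠ 0 := by exact_mod_cast hD
  by_cases hPQ : tx P = tx Q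
  · have hs : s2 P Q = s2 P P := by simp only [s2, hPQ]
    have hor : P = Q ∨ P = -Q := by
      rcases P with _ | ⟨x, y, h⟩
      · rcases Q with _ | ⟨x', y', h'⟩
        · left; rfl
        · have := congrFun hPQ 1; simp [tx] at this
      · rcases Q with _ | ⟨x', y', h'⟩
        · have := congrFun hPQ 1; simp [tx] at this
        · have := congrFun hPQ 0
          simp [tx] at this
          have hx : x = x' := by field_simp at this; exact this
          exact Point.X_eq_iff.mp hx
    obtain ⟨t, ht, e⟩ := s2_self_aux hD P
    refine ⟨t, ht, ?_⟩
    rw [hs, e]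
    rcases hor with h | h
    · subst h; rw [sub_self]
    · have : Q = -P := by rw [h, neg_neg]
      subst this
      rw [add_neg_cancel, sub_neg_eq_add, s2_comm]
  · rw [eval_addSub]
    rcases P with _ | ⟨x, y, h⟩
    · refine ⟨1, one_ne_zero, ?_⟩
      change _ = 1 • s2 ((0 : (TW a b D).Point) + Q) (0 - Q)
      rw [zero_add, zero_sub]
      have : s2 Q (-Q) = s2 Q Q := by simp only [s2, tx_neg]
      rw [this]
      rcases Q with _ | ⟨x', y', h'⟩
      · exact absurd rfl hPQ
      · ext i; fin_cases i
        · simp [s2, tx]; ring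
        · simp [s2, tx]; ring
        · simp [s2, tx]
    · rcases Q with _ | ⟨x', y', h'⟩
      · refine ⟨1, one_ne_zero, ?_⟩
        change _ = 1 • s2 (_ + (0 : (TW a b D).Point)) (_ - 0)
        rw [add_zero, sub_zero]
        ext i; fin_cases i
        · simp [s2, tx]; ring
        · simp [s2, tx]; ring
        · simp [s2, tx]
      · have hx : x ≠ x' := by
          rintro rfl; exact hPQ rfl
        have hx' : x - x' ≠ 0 := sub_ne_zero.mpr hx
        obtain ⟨h3, e3⟩ := tw_add_of_X_ne h h' hx
        obtain ⟨h4, e4⟩ := tw_neg h'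
        obtain ⟨h5, e5⟩ := tw_add_of_X_ne h h4 hx
        have e1 := tw_eq.mp h.1
        have e2 := tw_eq.mp h'.1
        have esub := sub_eq_add_neg (Point.some x y h : (TW a b D).Point) (Point.some x' y' h')
        rw [e4, e5] at esub
        rw [esub, e3]
        refine ⟨(x - x') ^ 2 / D ^ 2, by positivity, ?_⟩
        have f1 : y ^ 2 + y' ^ 2 = (x ^ 3 + a * D ^ 2 * x + b * D ^ 3) +
          (x' ^ 3 + a * D ^ 2 * x' + b * D ^ 3) := by rw [e1, e2]
        ext i; fin_cases i
        · simp [s2, tx]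
          field_simp
          ring_nf
          rw [show y ^ 4 = (y ^ 2) ^ 2 by ring, show y' ^ 4 = (y' ^ 2) ^ 2 by ring, e1, e2]
          ring
        · simp [s2, tx]
          field_simp
          ring_nf
          rw [e1, e2]
          ring
        · simp [s2, tx]; field_simp; ring

theorem th_par (a b : ℚ) (hab : 4 * a ^ 3 + 27 * b ^ 2 ≠ 0) :
    ∃ c : ℝ, ∀ (D : ℤ), D ≠ 0 → ∀ P Q : (TW a b D).Point,
      |th (P + Q) + th (P - Q) - 2 * th P - 2 * th Q| ≤ c := by
  have : (⟨0, 0, 0, a, b⟩ : WeierstrassCurve ℚ).IsElliptic := by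
    rw [WeierstrassCurve.isElliptic_iff, isUnit_iff_ne_zero]
    have : (⟨0, 0, 0, a, b⟩ : WeierstrassCurve ℚ).Δ = -16 * (4 * a ^ 3 + 27 * b ^ 2) := by
      simp [WeierstrassCurve.Δ, WeierstrassCurve.b₂, WeierstrassCurve.b₄,
        WeierstrassCurve.b₆, WeierstrassCurve.b₈]
      ring
    rw [this]
    simp [hab]
  obtain ⟨C1, h1⟩ := abs_logHeight_addSubMap_sub_two_mul_logHeight_le
    (⟨0, 0, 0, a, b⟩ : WeierstrassCurve ℚ)
  obtain ⟨C2, h2⟩ := abs_logHeight_sym2_sub_le ℚ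
  refine ⟨C1 + 3 * C2, fun D hD P Q => ?_⟩
  have key : ∀ P Q : (TW a b D).Point, |logHeight (s2 P Q) - (th P + th Q)| ≤ C2 := by
    intro P Q
    have := h2 (tx_ne P) (tx_ne Q)
    have e : ∀ P : (TW a b D).Point, ![tx P 0, tx P 1] = tx P := by
      intro P; ext i; fin_cases i <;> simp
    rw [e, e] at this
    exact this
  obtain ⟨t, ht, e⟩ := s2_aux hD P Q
  have k1 := h1 (s2 P Q)
  rw [e, logHeight_smul_eq_logHeight _ ht] at k1
  have k2 := abs_le.mp (key P Q)
  have k3 := abs_le.mp (key (P + Q) (P - Q))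
  have k4 := abs_le.mp k1
  rw [abs_le]
  constructor <;> linarith

end APTwist

end

section
namespace APTwist

open WeierstrassCurve WeierstrassCurve.Affine Height

/-- An injective code for points of bounded height. -/
noncomputable def code {a b : ℚ} {D : ℤ} : (TW a b D).Point → ℤ × ℕ × ℕ
  | .zero => (0, 0, 0)
  | .some x y _ => ((x / D).num, (x / D).den, if 0 ≤ y then 1 else 0)

theorem code_inj {a b : ℚ} {D : ℤ} (hD : D ≠ 0) :
    Function.Injective (code : (TW a b D).Point → _) := by
  have hD' : (D:ℚ) ≠ 0 := by exact_mod_cast hD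
  intro P Q hPQ
  rcases P with _ | ⟨x, y, h⟩ <;> rcases Q with _ | ⟨x', y', h'⟩
  · rfl
  · simp only [code, Prod.mk.injEq] at hPQ
    exact absurd hPQ.2.1.symm (Rat.den_nz _)
  · simp only [code, Prod.mk.injEq] at hPQ
    exact absurd hPQ.2.1 (Rat.den_nz _)
  · simp only [code, Prod.mk.injEq] at hPQ
    obtain ⟨h1, h2, h3⟩ := hPQ
    have hx : x / D = x' / D := Rat.ext h1 h2
    have hx : x = x' := by field_simp at hx; exact hx
    subst hx
    have e1 := tw_eq.mp h.1
    have e2 := tw_eq.mp h'.1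
    have hy : y = y' := by
      rcases sq_eq_sq_iff_eq_or_eq_neg.mp (e1.trans e2.symm) with e | e
      · exact e
      · subst e
        by_cases h0 : 0 ≤ y'
        · by_cases h0' : 0 ≤ -y'
          · linarith
          · simp [h0, h0'] at h3
        · by_cases h0' : 0 ≤ -y'
          · simp [h0, h0'] at h3
          · linarith
    subst hy
    rfl

theorem th_count {a b : ℚ} {D : ℤ} (hD : D ≠ 0) (B : ℝ) (hB : 0 ≤ B) :
    {P : (TW a b D).Point | th P ≤ B}.Finite ∧ 
    ({P : (TW a b D).Point | th P ≤ B}.ncard : ℝ) ≤ 12 * Real.exp (12 * B) := by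
  classical
  set n : ℕ := ⌊Real.exp B⌋₊ with hn
  let T : Finset (ℤ × ℕ × ℕ) := Finset.Icc (-(n:ℤ)) n ×ˢ (Finset.range (n+1) ×ˢ Finset.range 2)
  have hmap : ∀ P ∈ {P : (TW a b D).Point | th P ≤ B}, code P ∈ (T : Set (ℤ × ℕ × ℕ)) := by
    intro P hP
    change th P ≤ B at hP
    rcases P with _ | ⟨x, y, h⟩
    · simp [code, T]
    · rw [th_some, Rat.logHeight₁_eq_log_max] at hP
      have hpos : (0:ℝ) < max (((x/D).num.natAbs : ℕ):ℝ) (((x / D).den : ℕ):ℝ) := by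
        apply lt_max_of_lt_right
        exact_mod_cast (x/D).den_pos
      have h2 := (Real.log_le_iff_le_exp (by exact_mod_cast hpos)).mp hP
      have h3 : max (x/D).num.natAbs (x/D).den ≤ n := by
        rw [hn]; apply Nat.le_floor; exact_mod_cast h2
      have h4 := (le_max_left _ _).trans h3
      have h5 := (le_max_right _ _).trans h3
      simp only [code, T, Finset.coe_product, Set.mem_prod, Finset.mem_coe, Finset.mem_Icc,
        Finset.mem_range]
      refine ⟨⟨by omega, by omega⟩, by omega, ?_⟩
      split_ifs <;> omega
  refine ⟨Set.Finite.of_finite_image (T.finite_toSet.subset (Set.image_subset_iff.mpr hmap))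
    (code_inj hD).injOn, ?_⟩
  have h1 := Set.ncard_le_ncard_of_injOn code hmap (code_inj hD).injOn T.finite_toSet
  rw [Set.ncard_coe_finset] at h1
  have h2 : T.card = (2 * n + 1) * ((n + 1) * 2) := by
    simp only [T, Finset.card_product, Finset.card_range, Int.card_Icc]
    congr 1; omega
  rw [h2] at h1
  have h3 : (n:ℝ) ≤ Real.exp B := Nat.floor_le (Real.exp_pos _).le
  have h4 : 1 ≤ Real.exp B := Real.one_le_exp hB
  calc _ ≤ (((2 * n + 1) * ((n + 1) * 2) : ℕ) : ℝ) := by exact_mod_cast h1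
    _ = (2 * n + 1) * ((n + 1) * 2) := by push_cast; ring
    _ ≤ (2 * Real.exp B + Real.exp B) * ((Real.exp B + Real.exp B) * 2) := by gcongr
    _ = 12 * Real.exp (2 * B) := by rw [two_mul B, Real.exp_add]; ring
    _ ≤ _ := by gcongr; linarith

end APTwist

end

section
namespace APTwist

open Height Polynomial

theorem lh_le_of {q : ℚ} {T : ℝ} (h1 : (q.num.natAbs : ℝ) ≤ Real.exp T)
    (h2 : (q.den : ℝ) ≤ Real.exp T) : logHeight₁ q ≤ T := by
  rw [Rat.logHeight₁_eq_log_max, Real.log_le_iff_le_exp]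
  · push_cast; exact max_le h1 h2
  · push_cast; apply lt_max_of_lt_right; exact_mod_cast q.den_pos

theorem num_le_of_lh {q : ℚ} {T : ℝ} (h : logHeight₁ q ≤ T) :
    (q.num.natAbs : ℝ) ≤ Real.exp T ∧ (q.den : ℝ) ≤ Real.exp T := by
  rw [Rat.logHeight₁_eq_log_max, Real.log_le_iff_le_exp] at h
  · push_cast at h; exact ⟨(le_max_left _ _).trans h, (le_max_right _ _).trans h⟩
  · push_cast; apply lt_max_of_lt_right; exact_mod_cast q.den_pos

theorem int_root_bound (P : ℤ[X]) (hP : P ≠ 0) (x : ℚ) (hx : aeval x P = 0) (T : ℝ) (hT0 : 0 ≤ T)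
    (hT : ∀ i, ((P.coeff i).natAbs : ℝ) ≤ Real.exp T) : logHeight₁ x ≤ T := by
  by_cases hx0 : x = 0
  · subst hx0; simpa using hT0
  obtain ⟨Q, hQ, hnd⟩ := exists_eq_pow_rootMultiplicity_mul_and_not_dvd P hP 0
  set k := P.rootMultiplicity 0
  rw [C_0, sub_zero] at hQ hnd
  have hc : ∀ i, Q.coeff i = P.coeff (i + k) := by
    intro i; rw [hQ, coeff_X_pow_mul]
  have hQ0 : Q.coeff 0 ≠ 0 := by rwa [Ne, ← X_dvd_iff]
  have hQx : aeval x Q = 0 := by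
    rw [hQ, map_mul, map_pow, aeval_X] at hx
    rcases mul_eq_zero.mp hx with h | h
    · exact absurd h (pow_ne_zero k hx0)
    · exact h
  have d1 := num_dvd_of_is_root hQx
  have d2 := den_dvd_of_is_root hQx
  rw [(Rat.isFractionRingNum x).dvd_iff_dvd_left] at d1
  have hden : (x.den : ℤ) ∣ Q.leadingCoeff := by
    rw [← Rat.isFractionRingDen x, Int.natAbs_dvd]; exact d2
  have hQne : Q ≠ 0 := by rintro rfl; simp at hQ0
  apply lh_le_of
  · refine le_trans ?_ (hT (0 + k))
    rw [← hc]
    exact_mod_cast Nat.le_of_dvd (by omega) (Int.natAbs_dvd_natAbs.mpr d1)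
  · refine le_trans ?_ (hT (Q.natDegree + k))
    rw [← hc]
    have : Q.leadingCoeff ≠ 0 := leadingCoeff_ne_zero.mpr hQne
    have h3 := Int.natAbs_dvd_natAbs.mpr hden
    have := Nat.le_of_dvd (by omega) h3
    exact_mod_cast this

theorem rat_root_bound (p : ℚ[X]) (hp : p ≠ 0) (d : ℕ) (hd : p.natDegree ≤ d) (x : ℚ)
    (hx : p.eval x = 0) (T : ℝ) (hT0 : 0 ≤ T) (hT : ∀ i, logHeight₁ (p.coeff i) ≤ T) :
    logHeight₁ x ≤ (d + 2) * T := by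
  set m : ℕ := ∏ i ∈ Finset.range (d + 1), (p.coeff i).den with hm
  have hmpos : 0 < m := Finset.prod_pos fun i _ => (p.coeff i).den_pos
  have hm0 : (m : ℚ) ≠ 0 := by exact_mod_cast hmpos.ne'
  have hmle : (m : ℝ) ≤ Real.exp ((d + 1) * T) := by
    rw [hm]; push_cast
    calc ∏ i ∈ Finset.range (d + 1), ((p.coeff i).den : ℝ)
        ≤ ∏ i ∈ Finset.range (d + 1), Real.exp T :=
          Finset.prod_le_prod (fun _ _ => by positivity) fun i _ => (num_le_of_lh (hT i)).2
      _ = _ := by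
        rw [Finset.prod_const, Finset.card_range, ← Real.exp_nat_mul]; push_cast; rfl
  have hz : ∀ i, ∃ z : ℤ, (z : ℚ) = m * p.coeff i ∧ (z.natAbs : ℝ) ≤ Real.exp ((d + 2) * T) := by
    intro i
    by_cases hi : i ∈ Finset.range (d + 1)
    · obtain ⟨e, he⟩ : (p.coeff i).den ∣ m := Finset.dvd_prod_of_mem _ hi
      have hval : ((e * (p.coeff i).num : ℤ) : ℚ) = m * p.coeff i := by
        rw [he]; push_cast
        have := Rat.mul_den_eq_num (p.coeff i)
        rw [← this]; ring
      refine ⟨e * (p.coeff i).num, hval, ?_⟩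
      rw [Int.natAbs_mul, Int.natAbs_natCast]
      have hem : e ≤ m := by
        rw [he]; exact Nat.le_mul_of_pos_left _ (p.coeff i).den_pos
      push_cast
      calc (e:ℝ) * ((p.coeff i).num.natAbs : ℝ) ≤ Real.exp ((d + 1) * T) * Real.exp T := by
            gcongr
            · exact le_trans (by exact_mod_cast hem) hmle
            · exact (num_le_of_lh (hT i)).1
        _ = _ := by rw [← Real.exp_add]; ring_nf
    · refine ⟨0, ?_, by simp; positivity⟩
      rw [coeff_eq_zero_of_natDegree_lt]
      · simp
      · simp at hi; omega
  choose z hz1 hz2 using hz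
  set P : ℤ[X] := ∑ i ∈ Finset.range (d + 1), monomial i (z i) with hP
  have hcoeff : ∀ i, P.coeff i = z i := by
    intro i
    rw [hP, finsetSum_coeff]
    simp only [coeff_monomial]
    rw [Finset.sum_ite_eq']
    split_ifs with h
    · rfl
    · have : p.coeff i = 0 := coeff_eq_zero_of_natDegree_lt (by simp at h; omega)
      have h2 := hz1 i
      rw [this, mul_zero] at h2
      exact_mod_cast h2.symm
  have hmap : P.map (Int.castRingHom ℚ) = C (m:ℚ) * p := by
    ext i; rw [coeff_map, hcoeff, coeff_C_mul, ← hz1]; rfl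
  apply int_root_bound P
  · intro h0
    rw [h0, Polynomial.map_zero] at hmap
    exact (mul_ne_zero (C_ne_zero.mpr hm0) hp) hmap.symm
  · rw [aeval_def, ← eval_map, algebraMap_int_eq, hmap, eval_mul, hx, mul_zero]
  · positivity
  · intro i; rw [hcoeff]; exact hz2 i

/-- A family of polynomials with uniformly bounded degree and coefficient heights. -/
def Good {I : Type} (W : I → ℝ) (p : I → ℚ[X]) : Prop :=
  ∃ (d : ℕ) (c : ℝ), 0 ≤ c ∧ ∀ v, (p v).natDegree ≤ d ∧ ∀ i, logHeight₁ ((p v).coeff i) ≤ c * W v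

namespace Good

variable {I : Type} {W : I → ℝ}

theorem const (hW : ∀ v, 1 ≤ W v) (u : I → ℚ) (c : ℝ) (hu : ∀ v, logHeight₁ (u v) ≤ c * W v) :
    Good W (fun v => C (u v)) := by
  refine ⟨0, max c 0, le_max_right _ _, fun v => ⟨by simp, fun i => ?_⟩⟩
  have h0 : 0 ≤ max c 0 * W v := mul_nonneg (le_max_right _ _) (zero_le_one.trans (hW v))
  rw [coeff_C]
  split_ifs
  · exact (hu v).trans (by have := hW v; gcongr; exact le_max_left _ _)
  · simpa using h0

theorem cst (hW : ∀ v, 1 ≤ W v) (u : ℚ) : Good W (fun _ => C u) :=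
  const hW (fun _ => u) (logHeight₁ u)
    (fun v => le_mul_of_one_le_right (zero_le_logHeight₁ u) (hW v))

theorem vX (hW : ∀ v, 1 ≤ W v) : Good W (fun _ => (X : ℚ[X])) := by
  refine ⟨1, 0, le_rfl, fun v => ⟨by simp, fun i => ?_⟩⟩
  rw [coeff_X]; split_ifs <;> simp

theorem add (hW : ∀ v, 1 ≤ W v) {p q : I → ℚ[X]} (hp : Good W p) (hq : Good W q) :
    Good W (fun v => p v + q v) := by
  obtain ⟨d1, c1, h1, k1⟩ := hp
  obtain ⟨d2, c2, h2, k2⟩ := hq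
  set t : ℝ := totalWeight ℚ * Real.log 2
  have ht : 0 ≤ t := by positivity
  refine ⟨max d1 d2, t + c1 + c2, by positivity, fun v => ⟨?_, fun i => ?_⟩⟩
  · exact (natDegree_add_le _ _).trans (max_le_max (k1 v).1 (k2 v).1)
  · rw [coeff_add]
    refine (logHeight₁_add_le _ _).trans ?_
    have a1 := (k1 v).2 i
    have a2 := (k2 v).2 i
    have : t ≤ t * W v := le_mul_of_one_le_right ht (hW v)
    change t + _ + _ ≤ _
    linarith

theorem mul (hW : ∀ v, 1 ≤ W v) {p q : I → ℚ[X]} (hp : Good W p) (hq : Good W q) :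
    Good W (fun v => p v * q v) := by
  obtain ⟨d1, c1, h1, k1⟩ := hp
  obtain ⟨d2, c2, h2, k2⟩ := hq
  have hdeg : ∀ v, (p v * q v).natDegree ≤ d1 + d2 := fun v =>
    natDegree_mul_le.trans (add_le_add (k1 v).1 (k2 v).1)
  set t : ℝ := totalWeight ℚ * Real.log (d1 + d2 + 1 : ℕ)
  have ht : 0 ≤ t := by positivity
  refine ⟨d1 + d2, t + (d1 + d2 + 1) * (c1 + c2), by positivity, fun v => ⟨hdeg v, fun i => ?_⟩⟩
  have hW0 : 0 ≤ W v := zero_le_one.trans (hW v)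
  by_cases hi : i ≤ d1 + d2
  · rw [coeff_mul]
    refine (logHeight₁_sum_le _ _).trans ?_
    rw [Finset.Nat.card_antidiagonal]
    have s1 : ∑ x ∈ Finset.HasAntidiagonal.antidiagonal i, logHeight₁ ((p v).coeff x.1 * (q v).coeff x.2) ≤
        (d1 + d2 + 1) * ((c1 + c2) * W v) := by
      calc _ ≤ ∑ x ∈ Finset.HasAntidiagonal.antidiagonal i, (c1 + c2) * W v := by
            apply Finset.sum_le_sum
            intro x _
            refine (logHeight₁_mul_le _ _).trans ?_
            have a1 := (k1 v).2 x.1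
            have a2 := (k2 v).2 x.2
            linarith
        _ = (i + 1 : ℕ) * ((c1 + c2) * W v) := by
            rw [Finset.sum_const, Finset.Nat.card_antidiagonal, nsmul_eq_mul]
        _ ≤ _ := by
            gcongr
            exact_mod_cast Nat.succ_le_succ hi
    have s2 : totalWeight ℚ * Real.log ((i + 1 : ℕ)) ≤ t := by
      simp only [t]
      gcongr
    have s3 : t ≤ t * W v := le_mul_of_one_le_right ht (hW v)
    linarith
  · have hz : (p v * q v).coeff i = 0 :=
      coeff_eq_zero_of_natDegree_lt (by have := hdeg v; omega)
    rw [hz, logHeight₁_zero]; positivity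

theorem neg (hW : ∀ v, 1 ≤ W v) {p : I → ℚ[X]} (hp : Good W p) : Good W (fun v => - p v) := by
  have := mul hW (cst hW (-1)) hp
  simpa using this

theorem sub (hW : ∀ v, 1 ≤ W v) {p q : I → ℚ[X]} (hp : Good W p) (hq : Good W q) :
    Good W (fun v => p v - q v) := by
  have := add hW hp (neg hW hq)
  simpa [sub_eq_add_neg] using this

theorem pow (hW : ∀ v, 1 ≤ W v) {p : I → ℚ[X]} (hp : Good W p) (n : ℕ) :
    Good W (fun v => p v ^ n) := by
  induction n with
  | zero => simpa using cst hW 1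
  | succ n ih => simpa [pow_succ] using mul hW ih hp

theorem root {p : I → ℚ[X]} (hW : ∀ v, 1 ≤ W v) (hp : Good W p) :
    ∃ c : ℝ, ∀ v x, p v ≠ 0 → (p v).eval x = 0 → logHeight₁ x ≤ c * W v := by
  obtain ⟨d, c, hc, k⟩ := hp
  refine ⟨(d + 2) * c, fun v x h0 hx => ?_⟩
  rw [mul_assoc]
  have hW0 : 0 ≤ W v := zero_le_one.trans (hW v)
  exact rat_root_bound (p v) h0 d (k v).1 x hx _ (by positivity) (k v).2

end Good

end APTwist

end

section
namespace APTwist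

open Height Polynomial

/-- Parameters of the elimination polynomials. -/
structure Dat (a b : ℚ) where
  A : ℚ
  B : ℚ
  D : ℚ
  q : ℚ
  r : ℚ
  v : ℚ
  hA : A ≠ 0
  hv : v ^ 2 = (q ^ 3 + a * q + b) * (r ^ 3 + a * r + b)

/-- weight of the parameters -/
noncomputable def Dat.W {a b : ℚ} (t : Dat a b) : ℝ :=
  1 + logHeight₁ t.A + logHeight₁ t.B + logHeight₁ t.D + logHeight₁ t.q + logHeight₁ t.r

variable (a b : ℚ)

theorem one_le_W (t : Dat a b) : 1 ≤ t.W := by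
  have h1 := zero_le_logHeight₁ t.A
  have h2 := zero_le_logHeight₁ t.B
  have h3 := zero_le_logHeight₁ t.D
  have h4 := zero_le_logHeight₁ t.q
  have h5 := zero_le_logHeight₁ t.r
  unfold Dat.W; linarith

theorem gA : Good Dat.W (fun t : Dat a b => C t.A) := by
  refine Good.const (one_le_W a b) _ 1 fun t => ?_
  have h1 := zero_le_logHeight₁ t.A
  have h2 := zero_le_logHeight₁ t.B
  have h3 := zero_le_logHeight₁ t.D
  have h4 := zero_le_logHeight₁ t.q
  have h5 := zero_le_logHeight₁ t.r
  unfold Dat.W; linarith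
theorem gB : Good Dat.W (fun t : Dat a b => C t.B) := by
  refine Good.const (one_le_W a b) _ 1 fun t => ?_
  have h1 := zero_le_logHeight₁ t.A
  have h2 := zero_le_logHeight₁ t.B
  have h3 := zero_le_logHeight₁ t.D
  have h4 := zero_le_logHeight₁ t.q
  have h5 := zero_le_logHeight₁ t.r
  unfold Dat.W; linarith
theorem gD : Good Dat.W (fun t : Dat a b => C t.D) := by
  refine Good.const (one_le_W a b) _ 1 fun t => ?_
  have h1 := zero_le_logHeight₁ t.A
  have h2 := zero_le_logHeight₁ t.B
  have h3 := zero_le_logHeight₁ t.D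
  have h4 := zero_le_logHeight₁ t.q
  have h5 := zero_le_logHeight₁ t.r
  unfold Dat.W; linarith
theorem gq : Good Dat.W (fun t : Dat a b => C t.q) := by
  refine Good.const (one_le_W a b) _ 1 fun t => ?_
  have h1 := zero_le_logHeight₁ t.A
  have h2 := zero_le_logHeight₁ t.B
  have h3 := zero_le_logHeight₁ t.D
  have h4 := zero_le_logHeight₁ t.q
  have h5 := zero_le_logHeight₁ t.r
  unfold Dat.W; linarith
theorem gr : Good Dat.W (fun t : Dat a b => C t.r) := by
  refine Good.const (one_le_W a b) _ 1 fun t => ?_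
  have h1 := zero_le_logHeight₁ t.A
  have h2 := zero_le_logHeight₁ t.B
  have h3 := zero_le_logHeight₁ t.D
  have h4 := zero_le_logHeight₁ t.q
  have h5 := zero_le_logHeight₁ t.r
  unfold Dat.W; linarith

/-- the cubic -/
noncomputable def cubic : ℚ[X] := X ^ 3 + C a * X + C b

theorem gX : Good Dat.W (fun _ : Dat a b => (X : ℚ[X])) := Good.vX (one_le_W a b)

theorem gc (u : ℚ) : Good Dat.W (fun _ : Dat a b => C u) := Good.cst (one_le_W a b) u

theorem gfq : Good Dat.W (fun t : Dat a b => C t.q ^ 3 + C a * C t.q + C b) := by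
  have W := one_le_W a b
  exact .add W (.add W (.pow W (gq a b) 3) (.mul W (gc a b a) (gq a b))) (gc a b b)

theorem gfr : Good Dat.W (fun t : Dat a b => C t.r ^ 3 + C a * C t.r + C b) := by
  have W := one_le_W a b
  exact .add W (.add W (.pow W (gr a b) 3) (.mul W (gc a b a) (gr a b))) (gc a b b)

theorem gf : Good Dat.W (fun _ : Dat a b => (X : ℚ[X]) ^ 3 + C a * X + C b) := by
  have W := one_le_W a b
  exact .add W (.add W (.pow W (gX a b) 3) (.mul W (gc a b a) (gX a b))) (gc a b b)

theorem gv : Good Dat.W (fun t : Dat a b => C t.v) := by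
  obtain ⟨d1, c1, -, h1⟩ := gfq a b
  obtain ⟨d2, c2, -, h2⟩ := gfr a b
  refine Good.const (one_le_W a b) _ ((c1 + c2) / 2) fun t => ?_
  have k1 := (h1 t).2 0
  have k2 := (h2 t).2 0
  have e1 : (C t.q ^ 3 + C a * C t.q + C b).coeff 0 = t.q ^ 3 + a * t.q + b := by
    rw [← C_pow, ← C_mul, ← C_add, ← C_add, coeff_C_zero]
  have e2 : (C t.r ^ 3 + C a * C t.r + C b).coeff 0 = t.r ^ 3 + a * t.r + b := by
    rw [← C_pow, ← C_mul, ← C_add, ← C_add, coeff_C_zero]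
  rw [e1] at k1
  rw [e2] at k2
  have k3 := logHeight₁_mul_le (t.q ^ 3 + a * t.q + b) (t.r ^ 3 + a * t.r + b)
  rw [← t.hv, logHeight₁_pow] at k3
  push_cast at k3
  linarith

theorem e_lin : ∃ c : ℝ, ∀ (t : Dat a b) (x : ℚ), t.A * x + t.B * t.q + t.D * t.r = 0 →
    logHeight₁ x ≤ c * t.W := by
  have W := one_le_W a b
  have G : Good Dat.W (fun t : Dat a b => C t.A * X + C t.B * C t.q + C t.D * C t.r) :=
    .add W (.add W (.mul W (gA a b) (gX a b)) (.mul W (gB a b) (gq a b)))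
      (.mul W (gD a b) (gr a b))
  obtain ⟨c, hc⟩ := G.root W
  refine ⟨c, fun t x hx => hc t x ?_ (by simpa using hx)⟩
  intro h
  have h1 := congrArg (fun p => coeff p 1) h
  simp only [coeff_zero] at h1
  have h2 : coeff (C t.A * X + C t.B * C t.q + C t.D * C t.r) 1 = t.A := by
    compute_degree!
  exact t.hA (h2 ▸ h1)

theorem e_cub : ∃ c : ℝ, ∀ (t : Dat a b) (x : ℚ), t.A ^ 2 * (x ^ 3 + a * x + b) =
      t.B ^ 2 * (t.q ^ 3 + a * t.q + b) + 2 * t.B * t.D * t.v +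
      t.D ^ 2 * (t.r ^ 3 + a * t.r + b) →
    logHeight₁ x ≤ c * t.W := by
  have W := one_le_W a b
  have G : Good Dat.W (fun t : Dat a b => C t.A ^ 2 * (X ^ 3 + C a * X + C b) -
      (C t.B ^ 2 * (C t.q ^ 3 + C a * C t.q + C b) + C 2 * C t.B * C t.D * C t.v +
      C t.D ^ 2 * (C t.r ^ 3 + C a * C t.r + C b))) :=
    .sub W (.mul W (.pow W (gA a b) 2) (gf a b)) (.add W (.add W (.mul W (.pow W (gB a b) 2)
      (gfq a b)) (.mul W (.mul W (.mul W (gc a b 2) (gB a b)) (gD a b)) (gv a b)))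
      (.mul W (.pow W (gD a b) 2) (gfr a b)))
  obtain ⟨c, hc⟩ := G.root W
  refine ⟨c, fun t x hx => hc t x ?_ (by simp; linear_combination hx)⟩
  intro h
  have h1 := congrArg (fun p => coeff p 3) h
  simp only [coeff_zero] at h1
  have h2 : coeff (C t.A ^ 2 * (X ^ 3 + C a * X + C b) -
      (C t.B ^ 2 * (C t.q ^ 3 + C a * C t.q + C b) + C 2 * C t.B * C t.D * C t.v +
      C t.D ^ 2 * (C t.r ^ 3 + C a * C t.r + C b))) 3 = t.A ^ 2 := by
    compute_degree!
  exact (pow_ne_zero 2 t.hA) (h2 ▸ h1)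

theorem e_x : ∃ c : ℝ, ∀ (t : Dat a b) (x : ℚ),
    (t.A * x * (x - t.q) ^ 2 * (x - t.r) ^ 2
      + t.B * ((x * t.q + a) * (x + t.q) + 2 * b) * (x - t.r) ^ 2
      + t.D * ((x * t.r + a) * (x + t.r) + 2 * b) * (x - t.q) ^ 2) ^ 2 =
    4 * (x ^ 3 + a * x + b) * (t.B ^ 2 * (t.q ^ 3 + a * t.q + b) * (x - t.r) ^ 4
      + 2 * t.B * t.D * t.v * (x - t.q) ^ 2 * (x - t.r) ^ 2
      + t.D ^ 2 * (t.r ^ 3 + a * t.r + b) * (x - t.q) ^ 4) →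
    logHeight₁ x ≤ c * t.W := by
  have W := one_le_W a b
  have gxq : Good Dat.W (fun t : Dat a b => X - C t.q) := .sub W (gX a b) (gq a b)
  have gxr : Good Dat.W (fun t : Dat a b => X - C t.r) := .sub W (gX a b) (gr a b)
  have G : Good Dat.W (fun t : Dat a b =>
      (C t.A * X * (X - C t.q) ^ 2 * (X - C t.r) ^ 2
      + C t.B * ((X * C t.q + C a) * (X + C t.q) + C (2 * b)) * (X - C t.r) ^ 2
      + C t.D * ((X * C t.r + C a) * (X + C t.r) + C (2 * b)) * (X - C t.q) ^ 2) ^ 2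
      - C 4 * (X ^ 3 + C a * X + C b) *
        (C t.B ^ 2 * (C t.q ^ 3 + C a * C t.q + C b) * (X - C t.r) ^ 4
      + C 2 * C t.B * C t.D * C t.v * (X - C t.q) ^ 2 * (X - C t.r) ^ 2
      + C t.D ^ 2 * (C t.r ^ 3 + C a * C t.r + C b) * (X - C t.q) ^ 4)) := by
    refine .sub W (.pow W (.add W (.add W ?_ ?_) ?_) 2)
      (.mul W (.mul W (gc a b 4) (gf a b)) (.add W (.add W ?_ ?_) ?_))
    · exact .mul W (.mul W (.mul W (gA a b) (gX a b)) (.pow W gxq 2)) (.pow W gxr 2)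
    · exact .mul W (.mul W (gB a b) (.add W (.mul W (.add W (.mul W (gX a b) (gq a b)) (gc a b a))
        (.add W (gX a b) (gq a b))) (gc a b (2 * b)))) (.pow W gxr 2)
    · exact .mul W (.mul W (gD a b) (.add W (.mul W (.add W (.mul W (gX a b) (gr a b)) (gc a b a))
        (.add W (gX a b) (gr a b))) (gc a b (2 * b)))) (.pow W gxq 2)
    · exact .mul W (.mul W (.pow W (gB a b) 2) (gfq a b)) (.pow W gxr 4)
    · exact .mul W (.mul W (.mul W (.mul W (.mul W (gc a b 2) (gB a b)) (gD a b)) (gv a b))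
        (.pow W gxq 2)) (.pow W gxr 2)
    · exact .mul W (.mul W (.pow W (gD a b) 2) (gfr a b)) (.pow W gxq 4)
  obtain ⟨c, hc⟩ := G.root W
  refine ⟨c, fun t x hx => hc t x ?_ (by simp; linear_combination hx)⟩
  intro h
  have h1 := congrArg (fun p => coeff p 10) h
  simp only [coeff_zero] at h1
  have h2 : coeff ((C t.A * X * (X - C t.q) ^ 2 * (X - C t.r) ^ 2
      + C t.B * ((X * C t.q + C a) * (X + C t.q) + C (2 * b)) * (X - C t.r) ^ 2
      + C t.D * ((X * C t.r + C a) * (X + C t.r) + C (2 * b)) * (X - C t.q) ^ 2) ^ 2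
      - C 4 * (X ^ 3 + C a * X + C b) *
        (C t.B ^ 2 * (C t.q ^ 3 + C a * C t.q + C b) * (X - C t.r) ^ 4
      + C 2 * C t.B * C t.D * C t.v * (X - C t.q) ^ 2 * (X - C t.r) ^ 2
      + C t.D ^ 2 * (C t.r ^ 3 + C a * C t.r + C b) * (X - C t.q) ^ 4)) 10 = t.A ^ 2 := by
    compute_degree!
  exact (pow_ne_zero 2 t.hA) (h2 ▸ h1)

theorem e_y : ∃ c : ℝ, ∀ (t : Dat a b) (x : ℚ),
    (t.A * (x - t.q) ^ 3 * (x - t.r) ^ 3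
      + t.B * (2 * t.q ^ 3 - b - 3 * (t.q ^ 3 + a * t.q + b) - (3 * t.q ^ 2 + a) * x)
        * (x - t.r) ^ 3
      + t.D * (2 * t.r ^ 3 - b - 3 * (t.r ^ 3 + a * t.r + b) - (3 * t.r ^ 2 + a) * x)
        * (x - t.q) ^ 3) ^ 2 * (x ^ 3 + a * x + b) =
    t.B ^ 2 * (t.q ^ 3 + a * t.q + b) *
        (3 * (x ^ 3 + a * x + b) + (t.q ^ 3 + a * t.q + b) - (2 * x + t.q) * (x - t.q) ^ 2) ^ 2
         * (x - t.r) ^ 6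
      + 2 * t.B * t.D * t.v *
        (3 * (x ^ 3 + a * x + b) + (t.q ^ 3 + a * t.q + b) - (2 * x + t.q) * (x - t.q) ^ 2) *
        (3 * (x ^ 3 + a * x + b) + (t.r ^ 3 + a * t.r + b) - (2 * x + t.r) * (x - t.r) ^ 2) *
        (x - t.q) ^ 3 * (x - t.r) ^ 3
      + t.D ^ 2 * (t.r ^ 3 + a * t.r + b) *
        (3 * (x ^ 3 + a * x + b) + (t.r ^ 3 + a * t.r + b) - (2 * x + t.r) * (x - t.r) ^ 2) ^ 2
         * (x - t.q) ^ 6 →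
    logHeight₁ x ≤ c * t.W := by
  have W := one_le_W a b
  have gxq : Good Dat.W (fun t : Dat a b => X - C t.q) := .sub W (gX a b) (gq a b)
  have gxr : Good Dat.W (fun t : Dat a b => X - C t.r) := .sub W (gX a b) (gr a b)
  have gRq : Good Dat.W (fun t : Dat a b => C 3 * (X ^ 3 + C a * X + C b) +
      (C t.q ^ 3 + C a * C t.q + C b) - (C 2 * X + C t.q) * (X - C t.q) ^ 2) :=
    .sub W (.add W (.mul W (gc a b 3) (gf a b)) (gfq a b))
      (.mul W (.add W (.mul W (gc a b 2) (gX a b)) (gq a b)) (.pow W gxq 2))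
  have gRr : Good Dat.W (fun t : Dat a b => C 3 * (X ^ 3 + C a * X + C b) +
      (C t.r ^ 3 + C a * C t.r + C b) - (C 2 * X + C t.r) * (X - C t.r) ^ 2) :=
    .sub W (.add W (.mul W (gc a b 3) (gf a b)) (gfr a b))
      (.mul W (.add W (.mul W (gc a b 2) (gX a b)) (gr a b)) (.pow W gxr 2))
  have gSq : Good Dat.W (fun t : Dat a b => C 2 * C t.q ^ 3 - C b -
      C 3 * (C t.q ^ 3 + C a * C t.q + C b) - (C 3 * C t.q ^ 2 + C a) * X) :=
    .sub W (.sub W (.sub W (.mul W (gc a b 2) (.pow W (gq a b) 3)) (gc a b b))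
      (.mul W (gc a b 3) (gfq a b)))
      (.mul W (.add W (.mul W (gc a b 3) (.pow W (gq a b) 2)) (gc a b a)) (gX a b))
  have gSr : Good Dat.W (fun t : Dat a b => C 2 * C t.r ^ 3 - C b -
      C 3 * (C t.r ^ 3 + C a * C t.r + C b) - (C 3 * C t.r ^ 2 + C a) * X) :=
    .sub W (.sub W (.sub W (.mul W (gc a b 2) (.pow W (gr a b) 3)) (gc a b b))
      (.mul W (gc a b 3) (gfr a b)))
      (.mul W (.add W (.mul W (gc a b 3) (.pow W (gr a b) 2)) (gc a b a)) (gX a b))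
  have G : Good Dat.W (fun t : Dat a b =>
    (C t.A * (X - C t.q) ^ 3 * (X - C t.r) ^ 3
      + C t.B * (C 2 * C t.q ^ 3 - C b - C 3 * (C t.q ^ 3 + C a * C t.q + C b)
        - (C 3 * C t.q ^ 2 + C a) * X) * (X - C t.r) ^ 3
      + C t.D * (C 2 * C t.r ^ 3 - C b - C 3 * (C t.r ^ 3 + C a * C t.r + C b)
        - (C 3 * C t.r ^ 2 + C a) * X) * (X - C t.q) ^ 3) ^ 2 * (X ^ 3 + C a * X + C b) -
    (C t.B ^ 2 * (C t.q ^ 3 + C a * C t.q + C b) *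
        (C 3 * (X ^ 3 + C a * X + C b) + (C t.q ^ 3 + C a * C t.q + C b)
          - (C 2 * X + C t.q) * (X - C t.q) ^ 2) ^ 2 * (X - C t.r) ^ 6
      + C 2 * C t.B * C t.D * C t.v *
        (C 3 * (X ^ 3 + C a * X + C b) + (C t.q ^ 3 + C a * C t.q + C b)
          - (C 2 * X + C t.q) * (X - C t.q) ^ 2) *
        (C 3 * (X ^ 3 + C a * X + C b) + (C t.r ^ 3 + C a * C t.r + C b)
          - (C 2 * X + C t.r) * (X - C t.r) ^ 2) *
        (X - C t.q) ^ 3 * (X - C t.r) ^ 3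
      + C t.D ^ 2 * (C t.r ^ 3 + C a * C t.r + C b) *
        (C 3 * (X ^ 3 + C a * X + C b) + (C t.r ^ 3 + C a * C t.r + C b)
          - (C 2 * X + C t.r) * (X - C t.r) ^ 2) ^ 2 * (X - C t.q) ^ 6)) := by
    refine .sub W (.mul W (.pow W (.add W (.add W ?_ ?_) ?_) 2) (gf a b))
      (.add W (.add W ?_ ?_) ?_)
    · exact .mul W (.mul W (gA a b) (.pow W gxq 3)) (.pow W gxr 3)
    · exact .mul W (.mul W (gB a b) gSq) (.pow W gxr 3)
    · exact .mul W (.mul W (gD a b) gSr) (.pow W gxq 3)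
    · exact .mul W (.mul W (.mul W (.pow W (gB a b) 2) (gfq a b)) (.pow W gRq 2)) (.pow W gxr 6)
    · exact .mul W (.mul W (.mul W (.mul W (.mul W (.mul W (.mul W (gc a b 2) (gB a b)) (gD a b))
        (gv a b)) gRq) gRr) (.pow W gxq 3)) (.pow W gxr 3)
    · exact .mul W (.mul W (.mul W (.pow W (gD a b) 2) (gfr a b)) (.pow W gRr 2)) (.pow W gxq 6)
  obtain ⟨c, hc⟩ := G.root W
  refine ⟨c, fun t x hx => hc t x ?_ (by simp; linear_combination hx)⟩
  intro h
  have h1 := congrArg (fun p => coeff p 15) h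
  simp only [coeff_zero] at h1
  refine (pow_ne_zero 2 t.hA) (Eq.trans ?_ h1)
  symm
  compute_degree!

end APTwist

end

section
namespace APTwist

open WeierstrassCurve WeierstrassCurve.Affine Height

theorem model_eq {a b : ℚ} {D : ℤ} (hD : D ≠ 0) {x y : ℚ} (h : (TW a b D).Nonsingular x y) :
    (D:ℚ) * (y / D ^ 2) ^ 2 = (x / D) ^ 3 + a * (x / D) + b := by
  have hD' : (D:ℚ) ≠ 0 := by exact_mod_cast hD
  have := tw_eq.mp h.1
  field_simp
  linear_combination this

/-- The addition law in the model `D y² = x³ + a x + b`. -/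
theorem model_add {a b : ℚ} {D : ℤ} (hD : D ≠ 0) {x y x' y' x₃ y₃ : ℚ}
    (h : (TW a b D).Nonsingular x y) (h' : (TW a b D).Nonsingular x' y')
    (h₃ : (TW a b D).Nonsingular x₃ y₃) (hx : x ≠ x')
    (hadd : (Point.some x y h + Point.some x' y' h' : (TW a b D).Point) = Point.some x₃ y₃ h₃) :
    (x₃ / D) * (x / D - x' / D) ^ 2 = (x / D * (x' / D) + a) * (x / D + x' / D) + 2 * b
        - 2 * D * (y / D ^ 2) * (y' / D ^ 2) ∧
    (y₃ / D ^ 2) * (x / D - x' / D) ^ 3 = (y / D ^ 2) * (2 * (x' / D) ^ 3 - b -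
      3 * ((x' / D) ^ 3 + a * (x' / D) + b) - (3 * (x' / D) ^ 2 + a) * (x / D)) +
      (y' / D ^ 2) * (3 * ((x / D) ^ 3 + a * (x / D) + b) + ((x' / D) ^ 3 + a * (x' / D) + b)
        - (2 * (x / D) + x' / D) * (x / D - x' / D) ^ 2) := by
  have hD' : (D:ℚ) ≠ 0 := by exact_mod_cast hD
  have hx' : x - x' ≠ 0 := sub_ne_zero.mpr hx
  obtain ⟨h4, e⟩ := tw_add_of_X_ne h h' hx
  rw [hadd] at e
  have e1 := tw_eq.mp h.1
  have e2 := tw_eq.mp h'.1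
  have m1 := model_eq hD h
  have m2 := model_eq hD h'
  obtain ⟨ex, ey⟩ := (Point.some.injEq _ _ _ _ _ _).mp e
  have hxx : x / D - x' / D ≠ 0 := by
    rw [← sub_div]; exact div_ne_zero hx' hD'
  set l := (y / D ^ 2 - y' / D ^ 2) / (x / D - x' / D) with hl
  have hl' : (y - y') / (x - x') = D * l := by
    rw [hl]; field_simp
  have hl2 : l * (x / D - x' / D) = y / D ^ 2 - y' / D ^ 2 := div_mul_cancel₀ _ hxx
  have ex' : x₃ / D = D * l ^ 2 - x / D - x' / D := by
    rw [ex, hl']; field_simp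
  have ey' : y₃ / D ^ 2 = -(l * (x₃ / D - x / D) + y / D ^ 2) := by
    rw [ey, ← ex, hl']; field_simp
  clear_value l
  generalize x / (D:ℚ) = X at *
  generalize x' / (D:ℚ) = X' at *
  generalize y / (D:ℚ) ^ 2 = Y at *
  generalize y' / (D:ℚ) ^ 2 = Y' at *
  generalize (D:ℚ) = d at *
  have k1 : d * (l * (X - X')) ^ 2 = d * (Y - Y') ^ 2 := by rw [hl2]
  have k2 : d * (l * (X - X')) ^ 3 = d * (Y - Y') ^ 3 := by rw [hl2]
  constructor
  · rw [ex']
    linear_combination k1 + m1 + m2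
  · rw [ey', ex']
    linear_combination (-1) * k2 + (2 * X + X') * (X - X') ^ 2 * hl2 +
      (3 * Y' - Y) * m1 + (Y' - 3 * Y) * m2

theorem ap_rel {N : ℕ} {u : Fin N → ℚ} (h : IsNontrivAP u) (i j k : Fin N) :
    (((i : ℕ) : ℚ) - (j : ℕ)) * u k + (((j : ℕ) : ℚ) - (k : ℕ)) * u i +
      (((k : ℕ) : ℚ) - (i : ℕ)) * u j = 0 := by
  obtain ⟨α, β, -, hu⟩ := h
  rw [hu, hu, hu]; push_cast; ring

theorem ap_inj {N : ℕ} {u : Fin N → ℚ} (h : IsNontrivAP u) : Function.Injective u := by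
  obtain ⟨α, β, hβ, hu⟩ := h
  intro i j hij
  rw [hu, hu] at hij
  have : ((i:ℕ):ℚ) = (j:ℕ) := by
    push_cast at hij
    have : (((i:ℕ):ℚ) - (j:ℕ)) * β = 0 := by linear_combination hij
    rcases mul_eq_zero.mp this with h | h
    · linarith
    · exact absurd h hβ
  exact Fin.ext (by exact_mod_cast this)

theorem lh_diff {N : ℕ} {i j : Fin N} : logHeight₁ (((i : ℕ) : ℚ) - (j : ℕ)) ≤ Real.log N := by
  have hN : 0 < N := i.pos
  have hN' : (0:ℝ) < N := by exact_mod_cast hN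
  have e : (((i : ℕ) : ℚ) - (j : ℕ)) = (((i:ℕ):ℤ) - ((j:ℕ):ℤ) : ℤ) := by push_cast; ring
  have hi := i.2
  have hj := j.2
  apply lh_le_of
  · rw [e, Rat.num_intCast, Real.exp_log hN']
    have : (((i:ℕ):ℤ) - ((j:ℕ):ℤ)).natAbs ≤ N := by omega
    exact_mod_cast this
  · rw [e, Rat.den_intCast, Real.exp_log hN']
    exact_mod_cast hN

theorem diff_ne {N : ℕ} {i j : Fin N} (h : i ≠ j) : (((i : ℕ) : ℚ) - (j : ℕ)) ≠ 0 := by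
  rw [sub_ne_zero]; intro e; apply h; exact Fin.ext (by exact_mod_cast e)

/-- The data attached to three indices and two points. -/
noncomputable def mkDat {a b : ℚ} {D : ℤ} (hD : D ≠ 0) {N : ℕ} {i j k : Fin N} (hij : i ≠ j)
    {x y x' y' : ℚ} (h : (TW a b D).Nonsingular x y) (h' : (TW a b D).Nonsingular x' y') :
    Dat a b where
  A := ((i : ℕ) : ℚ) - (j : ℕ)
  B := ((j : ℕ) : ℚ) - (k : ℕ)
  D := ((k : ℕ) : ℚ) - (i : ℕ)
  q := x / D
  r := x' / D
  v := D * (y / D ^ 2) * (y' / D ^ 2)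
  hA := diff_ne hij
  hv := by
    rw [← model_eq hD h, ← model_eq hD h']; ring

theorem mkDat_W {a b : ℚ} {D : ℤ} (hD : D ≠ 0) {N : ℕ} {i j k : Fin N} (hij : i ≠ j)
    {x y x' y' : ℚ} (h : (TW a b D).Nonsingular x y) (h' : (TW a b D).Nonsingular x' y') :
    (mkDat (k := k) hD hij h h').W ≤
      3 * (th (Point.some x y h) + th (Point.some x' y' h') + (Real.log N + 1)) := by
  have t1 := th_nonneg (Point.some x y h)
  have t2 := th_nonneg (Point.some x' y' h')
  have l1 := lh_diff (i := i) (j := j)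
  have l2 := lh_diff (i := j) (j := k)
  have l3 := lh_diff (i := k) (j := i)
  rw [th_some] at t1 t2
  rw [th_some, th_some]
  simp only [Dat.W, mkDat]
  linarith

theorem H1 (a b : ℚ) : ∃ c : ℝ, 0 ≤ c ∧ ∀ D : ℤ, D ≠ 0 → ∀ (N : ℕ) (x y : Fin N → ℚ)
    (h : ∀ i, (TW a b D).Nonsingular (x i) (y i)), (IsNontrivAP x ∨ IsNontrivAP y) →
    ∀ i j k, i ≠ j → j ≠ k → i ≠ k → th (Point.some (x k) (y k) (h k)) ≤
      c * (th (Point.some (x i) (y i) (h i)) + th (Point.some (x j) (y j) (h j)) +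
        (Real.log N + 1)) := by
  obtain ⟨c1, k1⟩ := e_lin a b
  obtain ⟨c2, k2⟩ := e_cub a b
  refine ⟨3 * max (max c1 c2) 0, by positivity, ?_⟩
  intro D hD N x y h hAP i j k hij hjk hik
  have hD' : (D:ℚ) ≠ 0 := by exact_mod_cast hD
  set t := mkDat (k := k) hD hij (h i) (h j) with ht
  have hW := mkDat_W (k := k) hD hij (h i) (h j)
  rw [← ht] at hW
  have hW1 := one_le_W a b t
  have key : logHeight₁ (x k / D) ≤ max (max c1 c2) 0 * t.W := by
    rcases hAP with hA | hA
    · refine (k1 t (x k / D) ?_).trans ?_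
      · have := ap_rel hA i j k
        simp only [ht, mkDat]
        field_simp
        linear_combination this
      · gcongr; exact (le_max_left _ _).trans (le_max_left _ _)
    · refine (k2 t (x k / D) ?_).trans ?_
      · have h0 := ap_rel hA i j k
        simp only [ht, mkDat]
        rw [← model_eq hD (h i), ← model_eq hD (h j), ← model_eq hD (h k)]
        generalize (((i : ℕ) : ℚ) - (j : ℕ)) = A at *
        generalize (((j : ℕ) : ℚ) - (k : ℕ)) = B at *
        generalize (((k : ℕ) : ℚ) - (i : ℕ)) = C at *
        have : A * y k = -(B * y i + C * y j) := by linear_combination h0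
        have h2 : (A * y k) ^ 2 = (B * y i + C * y j) ^ 2 := by rw [this]; ring
        field_simp
        linear_combination h2
      · gcongr; exact (le_max_right _ _).trans (le_max_left _ _)
  rw [th_some (h k)]
  calc _ ≤ _ := key
    _ ≤ max (max c1 c2) 0 * (3 * _) := mul_le_mul_of_nonneg_left hW (le_max_right _ _)
    _ = _ := by ring

theorem H2 (a b : ℚ) : ∃ c : ℝ, 0 ≤ c ∧ ∀ D : ℤ, D ≠ 0 → ∀ (N : ℕ) (x y : Fin N → ℚ)
    (h : ∀ i, (TW a b D).Nonsingular (x i) (y i)), (IsNontrivAP x ∨ IsNontrivAP y) →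
    (Function.Injective (fun i => (Point.some (x i) (y i) (h i) : (TW a b D).Point))) →
    ∀ i j k, i ≠ j → j ≠ k → i ≠ k → th (Point.some (x i) (y i) (h i)) ≤
      c * (th (Point.some (x j) (y j) (h j) - Point.some (x i) (y i) (h i)) +
        th (Point.some (x k) (y k) (h k) - Point.some (x i) (y i) (h i)) +
        (Real.log N + 1)) := by
  obtain ⟨c1, k1⟩ := e_x a b
  obtain ⟨c2, k2⟩ := e_y a b
  refine ⟨max (3 * max (max c1 c2) 0) 1, by positivity, ?_⟩
  intro D hD N x y h hAP hinj i j k hij hjk hik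
  have hD' : (D:ℚ) ≠ 0 := by exact_mod_cast hD
  have hNpos : 0 < N := i.pos
  have hlog : 0 ≤ Real.log N := Real.log_natCast_nonneg N
  have hQ0 : (Point.some (x j) (y j) (h j) - Point.some (x i) (y i) (h i) : (TW a b D).Point) ≠ 0 :=
    fun e => hij.symm (hinj (sub_eq_zero.mp e))
  have hR0 : (Point.some (x k) (y k) (h k) - Point.some (x i) (y i) (h i) : (TW a b D).Point) ≠ 0 :=
    fun e => hik.symm (hinj (sub_eq_zero.mp e))
  have eQ : Point.some (x i) (y i) (h i) +
      (Point.some (x j) (y j) (h j) - Point.some (x i) (y i) (h i) : (TW a b D).Point) =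
      Point.some (x j) (y j) (h j) := add_sub_cancel _ _
  have eR : Point.some (x i) (y i) (h i) +
      (Point.some (x k) (y k) (h k) - Point.some (x i) (y i) (h i) : (TW a b D).Point) =
      Point.some (x k) (y k) (h k) := add_sub_cancel _ _
  generalize (Point.some (x j) (y j) (h j) - Point.some (x i) (y i) (h i) : (TW a b D).Point) = Q at *
  generalize (Point.some (x k) (y k) (h k) - Point.some (x i) (y i) (h i) : (TW a b D).Point) = R at *
  rcases Q with _ | ⟨q, s, hq⟩
  · exact absurd rfl hQ0
  rcases R with _ | ⟨r, w, hr⟩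
  · exact absurd rfl hR0
  have t1 := th_nonneg (Point.some q s hq)
  have t2 := th_nonneg (Point.some r w hr)
  by_cases hxq : x i = q
  · have : th (Point.some (x i) (y i) (h i)) = th (Point.some q s hq) := by
      rw [th_some, th_some, hxq]
    rw [this]
    calc _ ≤ 1 * (th (Point.some q s hq) + th (Point.some r w hr) + (Real.log N + 1)) := by linarith
      _ ≤ _ := by gcongr; exact le_max_right _ _
  by_cases hxr : x i = r
  · have : th (Point.some (x i) (y i) (h i)) = th (Point.some r w hr) := by
      rw [th_some, th_some, hxr]
    rw [this]
    calc _ ≤ 1 * (th (Point.some q s hq) + th (Point.some r w hr) + (Real.log N + 1)) := by linarith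
      _ ≤ _ := by gcongr; exact le_max_right _ _
  obtain ⟨a1, a2⟩ := model_add hD (h i) hq (h j) hxq eQ
  obtain ⟨b1, b2⟩ := model_add hD (h i) hr (h k) hxr eR
  set t := mkDat (k := i) hD hjk hq hr with ht
  have hW := mkDat_W (k := i) hD hjk hq hr
  rw [← ht] at hW
  have hW1 := one_le_W a b t
  have m0 := model_eq hD (h i)
  have mq := model_eq hD hq
  have mr := model_eq hD hr
  have key : logHeight₁ (x i / D) ≤ max (max c1 c2) 0 * t.W := by
    rcases hAP with hA | hA
    · refine (k1 t (x i / D) ?_).trans ?_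
      · have h0 := ap_rel hA j k i
        have h0 : (((j : ℕ) : ℚ) - (k : ℕ)) * (x i / D) + (((k : ℕ) : ℚ) - (i : ℕ)) * (x j / D) +
          (((i : ℕ) : ℚ) - (j : ℕ)) * (x k / D) = 0 := by field_simp; linear_combination h0
        simp only [ht, mkDat]
        generalize (((i : ℕ) : ℚ) - (j : ℕ)) = C at *
        generalize (((j : ℕ) : ℚ) - (k : ℕ)) = A at *
        generalize (((k : ℕ) : ℚ) - (i : ℕ)) = B at *
        rw [← m0, ← mq, ← mr]
        generalize x i / (D:ℚ) = X at *
        generalize x j / (D:ℚ) = Xj at *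
        generalize x k / (D:ℚ) = Xk at *
        generalize y i / (D:ℚ) ^ 2 = Y at *
        generalize q / (D:ℚ) = q at *
        generalize r / (D:ℚ) = r at *
        generalize s / (D:ℚ) ^ 2 = s at *
        generalize w / (D:ℚ) ^ 2 = w at *
        have e : A * X * (X - q) ^ 2 * (X - r) ^ 2 + B * ((X * q + a) * (X + q) + 2 * b) * (X - r) ^ 2
            + C * ((X * r + a) * (X + r) + 2 * b) * (X - q) ^ 2 =
            2 * D * Y * (B * s * (X - r) ^ 2 + C * w * (X - q) ^ 2) := by
          linear_combination (X - q) ^ 2 * (X - r) ^ 2 * h0 - B * (X - r) ^ 2 * a1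
            - C * (X - q) ^ 2 * b1
        rw [e]; ring
      · gcongr; exact (le_max_left _ _).trans (le_max_left _ _)
    · refine (k2 t (x i / D) ?_).trans ?_
      · have h0 := ap_rel hA j k i
        have h0 : (((j : ℕ) : ℚ) - (k : ℕ)) * (y i / D ^ 2) +
            (((k : ℕ) : ℚ) - (i : ℕ)) * (y j / D ^ 2) +
          (((i : ℕ) : ℚ) - (j : ℕ)) * (y k / D ^ 2) = 0 := by field_simp; linear_combination h0
        simp only [ht, mkDat]
        generalize (((i : ℕ) : ℚ) - (j : ℕ)) = C at *
        generalize (((j : ℕ) : ℚ) - (k : ℕ)) = A at *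
        generalize (((k : ℕ) : ℚ) - (i : ℕ)) = B at *
        generalize x i / (D:ℚ) = X at *
        generalize y i / (D:ℚ) ^ 2 = Y at *
        generalize y j / (D:ℚ) ^ 2 = Yj at *
        generalize y k / (D:ℚ) ^ 2 = Yk at *
        generalize q / (D:ℚ) = q at *
        generalize r / (D:ℚ) = r at *
        generalize s / (D:ℚ) ^ 2 = s at *
        generalize w / (D:ℚ) ^ 2 = w at *
        generalize (3 * (X ^ 3 + a * X + b) + (q ^ 3 + a * q + b) -
          (2 * X + q) * (X - q) ^ 2) = R1 at *
        generalize (3 * (X ^ 3 + a * X + b) + (r ^ 3 + a * r + b) -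
          (2 * X + r) * (X - r) ^ 2) = R2 at *
        generalize (2 * q ^ 3 - b - 3 * (q ^ 3 + a * q + b) - (3 * q ^ 2 + a) * X) = S1 at *
        generalize (2 * r ^ 3 - b - 3 * (r ^ 3 + a * r + b) - (3 * r ^ 2 + a) * X) = S2 at *
        rw [← m0, ← mq, ← mr]
        have e : Y * (A * (X - q) ^ 3 * (X - r) ^ 3 + B * S1 * (X - r) ^ 3 + C * S2 * (X - q) ^ 3)
            = -(B * s * R1 * (X - r) ^ 3 + C * w * R2 * (X - q) ^ 3) := by
          linear_combination (X - q) ^ 3 * (X - r) ^ 3 * h0 - B * (X - r) ^ 3 * a2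
            - C * (X - q) ^ 3 * b2
        generalize (A * (X - q) ^ 3 * (X - r) ^ 3 + B * S1 * (X - r) ^ 3 + C * S2 * (X - q) ^ 3)
          = G at *
        have e2 : D * (Y * G) ^ 2 = D * (B * s * R1 * (X - r) ^ 3 + C * w * R2 * (X - q) ^ 3) ^ 2 := by
          rw [e]; ring
        linear_combination e2
      · gcongr; exact (le_max_right _ _).trans (le_max_left _ _)
  rw [th_some (h i)]
  calc _ ≤ _ := key
    _ ≤ max (max c1 c2) 0 * (3 * (th (Point.some q s hq) + th (Point.some r w hr) +
        (Real.log N + 1))) := mul_le_mul_of_nonneg_left hW (le_max_right _ _)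
    _ = (3 * max (max c1 c2) 0) * (th (Point.some q s hq) + th (Point.some r w hr) +
        (Real.log N + 1)) := by ring
    _ ≤ _ := by gcongr; exact le_max_left _ _

end APTwist

end

section
namespace APTwist

open NumberField IsDedekindDomain WithZero

/-- `S` is covered by `M` classes modulo squares. -/
def Cl {K : Type} [Field K] (S : Set K) (M : ℕ) : Prop :=
  ∃ κ : K → Fin M, ∀ u ∈ S, ∀ v ∈ S, κ u = κ v → IsSquare (u * v)

theorem Cl.coset {K : Type} [Field K] {S1 S2 : Set K} {M : ℕ} (h0 : ∀ u ∈ S1, u ≠ 0)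
    {T : Type} [Finite T] (τ : K → T) (hτ : ∀ u ∈ S1, ∀ v ∈ S1, τ u = τ v → u * v ∈ S2)
    (h2 : Cl S2 M) : Cl S1 (Nat.card T * M) := by
  classical
  obtain ⟨κ, hκ⟩ := h2
  have hrep : ∀ t : T, ∃ r : K, (∃ u ∈ S1, τ u = t) → r ∈ S1 ∧ τ r = t := by
    intro t
    by_cases h : ∃ u ∈ S1, τ u = t
    · obtain ⟨u, hu⟩ := h; exact ⟨u, fun _ => hu⟩
    · exact ⟨0, fun h' => absurd h' h⟩
  choose r hr using hrep
  have e : T × Fin M ≃ Fin (Nat.card T * M) :=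
    (Equiv.prodCongr (Finite.equivFin T) (Equiv.refl _)).trans finProdFinEquiv
  refine ⟨fun u => e (τ u, κ (u * r (τ u))), fun u hu v hv huv => ?_⟩
  have h := e.injective huv
  simp only [Prod.mk.injEq] at h
  obtain ⟨h1, h2⟩ := h
  rw [← h1] at h2
  obtain ⟨r1, r2⟩ := hr (τ u) ⟨u, hu, rfl⟩
  obtain ⟨w, hw⟩ := hκ _ (hτ u hu _ r1 r2.symm) _ (hτ v hv _ r1 (by rw [r2, h1])) h2
  have hne := h0 _ r1
  refine ⟨w / r (τ u), ?_⟩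
  field_simp
  linear_combination hw

theorem Cl.mono {K : Type} [Field K] {S1 S2 : Set K} {M : ℕ} (h : S1 ⊆ S2) (h2 : Cl S2 M) :
    Cl S1 M := by
  obtain ⟨κ, hκ⟩ := h2
  exact ⟨κ, fun u hu v hv => hκ u (h hu) v (h hv)⟩

variable (K : Type) [Field K] [NumberField K]

theorem cl_units : ∃ m : ℕ, Cl {u : K | ∃ (e : (𝓞 K)ˣ) (t : K), t ≠ 0 ∧ u = (e : K) * t ^ 2} m := by
  classical
  have hfg : Group.FG (𝓞 K)ˣ := Group.fg_iff_monoid_fg.mpr inferInstance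
  let Q := (𝓞 K)ˣ ⧸ (powMonoidHom 2 : (𝓞 K)ˣ →* (𝓞 K)ˣ).range
  have hfg2 : Group.FG Q := inferInstance
  have hfin : Finite Q := by
    apply CommGroup.finite_of_fg_isMulTorsion
    intro x
    rw [isOfFinOrder_iff_pow_eq_one]
    refine ⟨2, by norm_num, ?_⟩
    induction x using QuotientGroup.induction_on with
    | H z =>
      rw [← QuotientGroup.mk_pow, QuotientGroup.eq_one_iff]
      exact ⟨z, rfl⟩
  have e := Finite.equivFin Q
  set S := {u : K | ∃ (e : (𝓞 K)ˣ) (t : K), t ≠ 0 ∧ u = (e : K) * t ^ 2}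
  have hch : ∀ u : K, ∃ ε : (𝓞 K)ˣ, u ∈ S → ∃ t : K, t ≠ 0 ∧ u = (ε : K) * t ^ 2 := by
    intro u
    by_cases h : u ∈ S
    · obtain ⟨e, t, h⟩ := h; exact ⟨e, fun _ => ⟨t, h⟩⟩
    · exact ⟨1, fun h' => absurd h' h⟩
  choose ε hε using hch
  refine ⟨Nat.card Q, fun u => e (QuotientGroup.mk (ε u)), fun u hu v hv huv => ?_⟩
  have h1 := e.injective huv
  rw [QuotientGroup.eq] at h1
  obtain ⟨w, hw⟩ := h1
  obtain ⟨t, ht, hut⟩ := hε u hu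
  obtain ⟨s, hs, hvs⟩ := hε v hv
  have hw' : ε v = ε u * w ^ 2 := by
    rw [powMonoidHom_apply] at hw; rw [hw]; group
  have hvs' : v = algebraMap (𝓞 K) K (ε u) * algebraMap (𝓞 K) K w ^ 2 * s ^ 2 := by
    rw [hw', Units.val_mul, Units.val_pow_eq_pow_val, map_mul, map_pow] at hvs
    exact hvs
  refine ⟨algebraMap (𝓞 K) K (ε u) * algebraMap (𝓞 K) K w * t * s, ?_⟩
  linear_combination v * hut + algebraMap (𝓞 K) K (ε u) * t ^ 2 * hvs'

/-- even valuation everywhere, integral version: the ideal is a square -/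
theorem ideal_sq (α : 𝓞 K) (hα : α ≠ 0)
    (h : ∀ v : HeightOneSpectrum (𝓞 K), IsSquare (v.valuation K (algebraMap (𝓞 K) K α))) :
    ∃ I : Ideal (𝓞 K), I ≠ ⊥ ∧ I ^ 2 = Ideal.span {α} := by
  classical
  have hI : (Ideal.span {α} : Ideal (𝓞 K)) ≠ 0 := by
    rw [Ne, Submodule.zero_eq_bot, Ideal.span_singleton_eq_bot]; exact hα
  set n : HeightOneSpectrum (𝓞 K) → ℕ := fun v =>
    (Associates.mk v.asIdeal).count (Associates.mk (Ideal.span {α} : Ideal (𝓞 K))).factors with hn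
  have hev : ∀ v, n v = 2 * (n v / 2) := by
    intro v
    obtain ⟨r, hr⟩ := h v
    rw [HeightOneSpectrum.valuation_of_algebraMap, v.intValuation_if_neg hα] at hr
    have hr0 : r ≠ 0 := by rintro rfl; simp at hr
    obtain ⟨z, rfl⟩ : ∃ z : ℤ, r = exp z := ⟨log r, (exp_log hr0).symm⟩
    rw [← exp_add, exp_inj] at hr
    change -(n v : ℤ) = _ at hr
    omega
  have hfs := Ideal.hasFiniteMulSupport hI
  have hfs2 : Function.HasFiniteMulSupport
      (fun v : HeightOneSpectrum (𝓞 K) => v.asIdeal ^ (n v / 2)) := by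
    refine Set.Finite.subset hfs ?_
    intro v hv hv1
    apply hv
    change v.asIdeal ^ (n v) = 1 at hv1
    change v.asIdeal ^ (n v / 2) = 1
    rw [hev v, pow_mul'] at hv1
    rw [Ideal.one_eq_top] at *
    rw [eq_top_iff, ← hv1]
    exact Ideal.pow_le_self two_ne_zero
  have key : (∏ᶠ v : HeightOneSpectrum (𝓞 K), v.asIdeal ^ (n v / 2)) ^ 2 = Ideal.span {α} := by
    rw [finprod_pow hfs2]
    conv_rhs => rw [← Ideal.finprod_heightOneSpectrum_factorization hI]
    apply finprod_congr
    intro v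
    change _ = v.asIdeal ^ (n v)
    rw [← pow_mul', ← hev v]
  refine ⟨_, ?_, key⟩
  intro h0
  rw [h0] at key
  apply hI
  rw [← key]
  simp

theorem cl_empty : ∃ m : ℕ, Cl {u : K | u ≠ 0 ∧ ∀ v : HeightOneSpectrum (𝓞 K),
    IsSquare (v.valuation K u)} m := by
  classical
  obtain ⟨m, hm⟩ := cl_units K
  set S := {u : K | u ≠ 0 ∧ ∀ v : HeightOneSpectrum (𝓞 K), IsSquare (v.valuation K u)} with hS
  have hch : ∀ u : K, ∃ I : nonZeroDivisors (Ideal (𝓞 K)), u ∈ S → ∃ (α d : 𝓞 K), α ≠ 0 ∧ d ≠ 0 ∧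
      algebraMap (𝓞 K) K α = u * algebraMap (𝓞 K) K d ^ 2 ∧ (I : Ideal (𝓞 K)) ^ 2 = Ideal.span {α} := by
    intro u
    by_cases h : u ∈ S
    · obtain ⟨x, d, hd, hx⟩ := IsFractionRing.div_surjective (A := 𝓞 K) u
      have hd0 : d ≠ 0 := nonZeroDivisors.ne_zero hd
      have hdK : (algebraMap (𝓞 K) K d) ≠ 0 := by simpa using hd0
      have hα : algebraMap (𝓞 K) K (x * d) = u * algebraMap (𝓞 K) K d ^ 2 := by
        rw [← hx, map_mul]
        field_simp
      have hne : x * d ≠ 0 := by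
        intro h0
        rw [h0, map_zero] at hα
        exact mul_ne_zero h.1 (pow_ne_zero 2 hdK) hα.symm
      obtain ⟨I, hI0, hI⟩ := ideal_sq K (x * d) hne (by
        intro v; rw [hα, map_mul, map_pow]
        exact (h.2 v).mul (IsSquare.sq _))
      exact ⟨⟨I, mem_nonZeroDivisors_of_ne_zero hI0⟩, fun _ => ⟨x * d, d, hne, hd0, hα, hI⟩⟩
    · exact ⟨1, fun h' => absurd h' h⟩
  choose I hI using hch
  refine ⟨_, Cl.coset (fun u hu => hu.1) (fun u => ClassGroup.mk0 (I u)) ?_ hm⟩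
  intro u hu v hv huv
  obtain ⟨α, d, hα, hd, e1, e2⟩ := hI u hu
  obtain ⟨β, d', hβ, hd', e3, e4⟩ := hI v hv
  obtain ⟨x, y, hx, hy, hxy⟩ := ClassGroup.mk0_eq_mk0_iff.mp huv
  have h2 : Ideal.span {x ^ 2 * α} = Ideal.span {y ^ 2 * β} := by
    rw [← Ideal.span_singleton_mul_span_singleton, ← Ideal.span_singleton_mul_span_singleton,
      ← e2, ← e4, ← Ideal.span_singleton_pow, ← Ideal.span_singleton_pow, ← mul_pow, ← mul_pow, hxy]
  rw [Ideal.span_singleton_eq_span_singleton] at h2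
  obtain ⟨ε, hε⟩ := h2
  have hε' := congrArg (algebraMap (𝓞 K) K) hε
  simp only [map_mul, map_pow] at hε'
  have hxK : (algebraMap (𝓞 K) K x) ≠ 0 := by simpa using hx
  have hyK : (algebraMap (𝓞 K) K y) ≠ 0 := by simpa using hy
  have hdK : (algebraMap (𝓞 K) K d) ≠ 0 := by simpa using hd
  have hdK' : (algebraMap (𝓞 K) K d') ≠ 0 := by simpa using hd'
  refine ⟨ε, algebraMap (𝓞 K) K x * u * algebraMap (𝓞 K) K d / (algebraMap (𝓞 K) K y *
    algebraMap (𝓞 K) K d'), ?_, ?_⟩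
  · have := hu.1
    positivity
  · rw [e1, e3] at hε'
    field_simp
    linear_combination (-u) * hε'

theorem primes_above (p : ℕ) (hp : p.Prime) :
    {v : HeightOneSpectrum (𝓞 K) | (p : 𝓞 K) ∈ v.asIdeal}.Finite ∧
    {v : HeightOneSpectrum (𝓞 K) | (p : 𝓞 K) ∈ v.asIdeal}.ncard ≤ Module.finrank ℚ K := by
  classical
  set P : Ideal ℤ := Ideal.span {(p : ℤ)} with hP
  have hP0 : P ≠ ⊥ := by
    rw [hP, Ne, Ideal.span_singleton_eq_bot]; exact_mod_cast hp.ne_zero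
  have hPm : P.IsMaximal := by
    have : P.IsPrime := (Ideal.span_singleton_prime (by exact_mod_cast hp.ne_zero)).mpr
      (Nat.prime_iff_prime_int.mp hp)
    exact this.isMaximal hP0
  have hcard := Ideal.card_primesOverFinset_le_finrank (𝓞 K) ℚ K hP0
  have hmap : ∀ v ∈ {v : HeightOneSpectrum (𝓞 K) | (p : 𝓞 K) ∈ v.asIdeal},
      v.asIdeal ∈ ((IsDedekindDomain.primesOverFinset P (𝓞 K) : Finset _) : Set (Ideal (𝓞 K))) := by
    intro v hv
    rw [Finset.mem_coe, IsDedekindDomain.mem_primesOverFinset_iff hP0]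
    refine ⟨v.isPrime, ⟨?_⟩⟩
    apply hPm.eq_of_le
    · exact Ideal.IsPrime.ne_top (Ideal.IsPrime.under ℤ v.asIdeal)
    · rw [hP, Ideal.span_singleton_le_iff_mem]
      change algebraMap ℤ (𝓞 K) p ∈ v.asIdeal
      simpa using hv
  have hinj : Set.InjOn (fun v : HeightOneSpectrum (𝓞 K) => v.asIdeal)
      {v : HeightOneSpectrum (𝓞 K) | (p : 𝓞 K) ∈ v.asIdeal} :=
    fun v _ w _ h => HeightOneSpectrum.ext h
  refine ⟨Set.Finite.of_finite_image ((Finset.finite_toSet _).subset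
    (Set.image_subset_iff.mpr hmap)) hinj, ?_⟩
  refine le_trans (Set.ncard_le_ncard_of_injOn _ hmap hinj (Finset.finite_toSet _)) ?_
  rwa [Set.ncard_coe_finset]

theorem exists_prime_mem (v : HeightOneSpectrum (𝓞 K)) (n : ℕ) (hn : n ≠ 0)
    (h : (n : 𝓞 K) ∈ v.asIdeal) : ∃ p ∈ n.primeFactors, (p : 𝓞 K) ∈ v.asIdeal := by
  induction n using Nat.recOnMul with
  | zero => exact absurd rfl hn
  | one =>
    rw [Nat.cast_one] at h
    exact absurd (Ideal.eq_top_of_isUnit_mem _ h isUnit_one) v.isPrime.ne_top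
  | prime p hp => exact ⟨p, by simp [hp.primeFactors], h⟩
  | mul x y hx hy =>
    have hx0 : x ≠ 0 := by rintro rfl; simp at hn
    have hy0 : y ≠ 0 := by rintro rfl; simp at hn
    rw [Nat.cast_mul] at h
    rw [Nat.primeFactors_mul hx0 hy0]
    rcases v.isPrime.mem_or_mem h with h | h
    · obtain ⟨p, hp, hv⟩ := hx hx0 h
      exact ⟨p, Finset.mem_union_left _ hp, hv⟩
    · obtain ⟨p, hp, hv⟩ := hy hy0 h
      exact ⟨p, Finset.mem_union_right _ hp, hv⟩

theorem primes_dvd (D : ℤ) (hD : D ≠ 0) :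
    {v : HeightOneSpectrum (𝓞 K) | (D : 𝓞 K) ∈ v.asIdeal}.Finite ∧
    {v : HeightOneSpectrum (𝓞 K) | (D : 𝓞 K) ∈ v.asIdeal}.ncard ≤
      D.natAbs.primeFactors.card * Module.finrank ℚ K := by
  classical
  have hsub : {v : HeightOneSpectrum (𝓞 K) | (D : 𝓞 K) ∈ v.asIdeal} ⊆
      ⋃ p ∈ D.natAbs.primeFactors, {v : HeightOneSpectrum (𝓞 K) | (p : 𝓞 K) ∈ v.asIdeal} := by
    intro v hv
    have : ((D.natAbs : ℕ) : 𝓞 K) ∈ v.asIdeal := by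
      rcases Int.natAbs_eq D with h | h
      · rw [← Int.cast_natCast, ← h]; exact hv
      · have h' : ((D.natAbs : ℤ)) = -D := by omega
        rw [← Int.cast_natCast, h', Int.cast_neg, neg_mem_iff]; exact hv
    obtain ⟨p, hp, h⟩ := exists_prime_mem K v _ (Int.natAbs_ne_zero.mpr hD) this
    exact Set.mem_biUnion hp h
  have hfin : ∀ s : Finset ℕ, (∀ p ∈ s, p.Prime) →
      (⋃ p ∈ s, {v : HeightOneSpectrum (𝓞 K) | (p : 𝓞 K) ∈ v.asIdeal}).Finite ∧
      (⋃ p ∈ s, {v : HeightOneSpectrum (𝓞 K) | (p : 𝓞 K) ∈ v.asIdeal}).ncard ≤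
        s.card * Module.finrank ℚ K := by
    intro s
    induction s using Finset.induction_on with
    | empty => simp
    | insert p s hps ih =>
      intro hs
      obtain ⟨i1, i2⟩ := ih (fun q hq => hs q (Finset.mem_insert_of_mem hq))
      obtain ⟨j1, j2⟩ := primes_above K p (hs p (Finset.mem_insert_self _ _))
      rw [Finset.set_biUnion_insert, Finset.card_insert_of_notMem hps]
      refine ⟨j1.union i1, (Set.ncard_union_le _ _).trans ?_⟩
      rw [add_mul, one_mul]
      omega
  obtain ⟨h1, h2⟩ := hfin D.natAbs.primeFactors fun p hp => Nat.prime_of_mem_primeFactors hp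
  exact ⟨h1.subset hsub, (Set.ncard_le_ncard hsub h1).trans h2⟩

theorem isSquare_mul_of_not {x y : ℤᵐ⁰} (hx : x ≠ 0) (hy : y ≠ 0) (h : IsSquare x ↔ IsSquare y) :
    IsSquare (x * y) := by
  obtain ⟨z, rfl⟩ : ∃ z : ℤ, x = exp z := ⟨log x, (exp_log hx).symm⟩
  obtain ⟨w, rfl⟩ : ∃ z : ℤ, y = exp z := ⟨log y, (exp_log hy).symm⟩
  have key : ∀ z : ℤ, IsSquare (exp z : ℤᵐ⁰) ↔ Even z := by
    intro z
    constructor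
    · rintro ⟨r, hr⟩
      have hr0 : r ≠ 0 := by rintro rfl; simp at hr
      refine ⟨log r, ?_⟩
      rw [← exp_log hr0, ← exp_add, exp_inj] at hr
      exact hr
    · rintro ⟨r, rfl⟩
      exact ⟨exp r, by rw [exp_add]⟩
  rw [key, key] at h
  rw [← exp_add, key, Int.even_add]
  exact h

/-- Elements with even valuation away from `S₀` and `D` lie in few classes modulo squares. -/
theorem cl_selmer (S₀ : Set (HeightOneSpectrum (𝓞 K))) (hS₀ : S₀.Finite) :
    ∃ C : ℕ, 1 ≤ C ∧ ∀ D : ℤ, D ≠ 0 → ∃ M : ℕ, M ≤ C ^ (D.natAbs.primeFactors.card + 1) ∧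
      Cl {u : K | u ≠ 0 ∧ ∀ v : HeightOneSpectrum (𝓞 K), v ∉ S₀ → (D : 𝓞 K) ∉ v.asIdeal →
        IsSquare (v.valuation K u)} M := by
  classical
  obtain ⟨m, hm⟩ := cl_empty K
  set n := Module.finrank ℚ K
  refine ⟨2 ^ (S₀.ncard + n) * (m + 1), Nat.one_le_iff_ne_zero.mpr (by positivity), ?_⟩
  intro D hD
  obtain ⟨f1, f2⟩ := primes_dvd K D hD
  set S := S₀ ∪ {v : HeightOneSpectrum (𝓞 K) | (D : 𝓞 K) ∈ v.asIdeal} with hS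
  have hSf : S.Finite := hS₀.union f1
  have hSc : S.ncard ≤ S₀.ncard + D.natAbs.primeFactors.card * n :=
    (Set.ncard_union_le _ _).trans (Nat.add_le_add_left f2 _)
  have : Finite S := hSf
  refine ⟨_, ?_, Cl.coset (T := S → Bool) (fun u hu => hu.1)
    (fun u v => decide (IsSquare (v.1.valuation K u))) ?_ hm⟩
  · rw [Nat.card_fun, Nat.card_coe_set_eq]
    simp only [Nat.card_eq_fintype_card, Fintype.card_bool]
    set w := D.natAbs.primeFactors.card
    rw [mul_pow]
    apply Nat.mul_le_mul
    · rw [← pow_mul]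
      apply Nat.pow_le_pow_right (by norm_num)
      nlinarith [Nat.zero_le (S₀.ncard * w)]
    · calc m ≤ m + 1 := Nat.le_succ _
        _ = (m + 1) ^ 1 := (pow_one _).symm
        _ ≤ _ := Nat.pow_le_pow_right (by omega) (by omega)
  · intro u hu v hv huv
    refine ⟨mul_ne_zero hu.1 hv.1, fun w => ?_⟩
    rw [map_mul]
    by_cases hw : w ∈ S
    · have h1 := congrFun huv ⟨w, hw⟩
      simp only [decide_eq_decide] at h1
      exact isSquare_mul_of_not (by simpa using hu.1) (by simpa using hv.1) h1
    · rw [hS, Set.mem_union, not_or] at hw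
      exact (hu.2 w hw.1 hw.2).mul (hv.2 w hw.1 hw.2)

end APTwist

end

section
namespace APTwist

open NumberField IsDedekindDomain WithZero Polynomial

theorem val_square {K : Type} [Field K] (v : Valuation K ℤᵐ⁰) (D e y t δ : K) (hD : v D = 1)
    (ht : v t ≤ 1) (hδ : v δ = 1) (he : e ≠ 0)
    (h : D * y ^ 2 = e * (e ^ 2 + t * e + δ)) : IsSquare (v (D * e)) := by
  have hv := congrArg v h
  rw [map_mul, map_mul, map_pow, hD, one_mul] at hv
  rw [map_mul, hD, one_mul]
  have he0 : v e ≠ 0 := by simpa using he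
  have hepos : 0 < v e := zero_lt_iff.mpr he0
  rcases lt_trichotomy (v e) 1 with h1 | h1 | h1
  · have h2 : v (e ^ 2 + t * e) < 1 := by
      have : e ^ 2 + t * e = e * (e + t) := by ring
      rw [this, map_mul]
      have h3 : v (e + t) ≤ 1 := (v.map_add e t).trans (max_le h1.le ht)
      calc v e * v (e + t) ≤ v e * 1 := by gcongr
        _ < 1 := by rwa [mul_one]
    have h3 : v (e ^ 2 + t * e + δ) = 1 := by
      rw [v.map_add_eq_of_lt_right (by rw [hδ]; exact h2), hδ]
    rw [h3, mul_one] at hv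
    rw [← hv]; exact IsSquare.sq _
  · rw [h1]; exact IsSquare.one
  · have h2 : v (t * e + δ) < v (e ^ 2) := by
      have h3 : v (t * e + δ) ≤ v e := by
        refine (v.map_add _ _).trans (max_le ?_ (by rw [hδ]; exact h1.le))
        rw [map_mul]
        calc v t * v e ≤ 1 * v e := by gcongr
          _ = v e := one_mul _
      refine lt_of_le_of_lt h3 ?_
      rw [map_pow, pow_two]
      calc v e = v e * 1 := (mul_one _).symm
        _ < v e * v e := by gcongr
    rw [add_assoc, v.map_add_eq_of_lt_left h2, map_pow] at hv
    refine ⟨v y / v e, ?_⟩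
    field_simp
    rw [hv, pow_succ' (v e) 2]

/-- finitely many bad places for a nonzero element -/
theorem finite_bad (K : Type) [Field K] [NumberField K] (k : K) (hk : k ≠ 0) :
    {v : HeightOneSpectrum (𝓞 K) | v.valuation K k ≠ 1}.Finite := by
  refine ((HeightOneSpectrum.Support.finite (𝓞 K) k).union
    (HeightOneSpectrum.Support.finite (𝓞 K) k⁻¹)).subset ?_
  intro v hv
  rcases lt_or_gt_of_ne hv with h | h
  · right
    change 1 < v.valuation K k⁻¹
    rw [map_inv₀]
    exact (one_lt_inv₀ (zero_lt_iff.mpr (by simpa using hk))).mpr h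
  · left; exact h

theorem selmer_map (K : Type) [Field K] [NumberField K] (a b : ℚ)
    (hab : 4 * a ^ 3 + 27 * b ^ 2 ≠ 0) (θ : K) (hθ : θ ^ 3 + (a : K) * θ + (b : K) = 0) :
    ∃ C : ℕ, 1 ≤ C ∧ ∀ D : ℤ, D ≠ 0 → ∃ M : ℕ, M ≤ C ^ (D.natAbs.primeFactors.card + 1) ∧
      ∃ κ : ℚ → Fin M, ∀ x₁ y₁ x₂ y₂ : ℚ, y₁ ≠ 0 → y₂ ≠ 0 →
        D * y₁ ^ 2 = x₁ ^ 3 + a * x₁ + b → D * y₂ ^ 2 = x₂ ^ 3 + a * x₂ + b →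
        κ x₁ = κ x₂ → IsSquare (((x₁ : K) - θ) * ((x₂ : K) - θ)) := by
  set δ : K := 3 * θ ^ 2 + (a : K) with hδ
  have hδ0 : δ ≠ 0 := by
    intro h0
    apply hab
    have : ((4 * a ^ 3 + 27 * b ^ 2 : ℚ) : K) = 0 := by
      push_cast
      have ha : (a : K) = - 3 * θ ^ 2 := by linear_combination h0
      have hb : (b : K) = 2 * θ ^ 3 := by linear_combination hθ - θ * ha
      rw [ha, hb]; ring
    exact_mod_cast this
  set S₀ : Set (HeightOneSpectrum (𝓞 K)) := HeightOneSpectrum.Support (𝓞 K) (3 * θ) ∪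
    {v : HeightOneSpectrum (𝓞 K) | v.valuation K δ ≠ 1} with hS₀
  obtain ⟨C, hC, hCl⟩ := cl_selmer K S₀
    ((HeightOneSpectrum.Support.finite (𝓞 K) _).union (finite_bad K δ hδ0))
  refine ⟨C, hC, fun D hD => ?_⟩
  obtain ⟨M, hM, κ, hκ⟩ := hCl D hD
  refine ⟨M, hM, fun x => κ (D * ((x : K) - θ)), ?_⟩
  have hDK : (D : K) ≠ 0 := by exact_mod_cast hD
  have key : ∀ x y : ℚ, y ≠ 0 → D * y ^ 2 = x ^ 3 + a * x + b →
      (D : K) * ((x : K) - θ) ∈ {u : K | u ≠ 0 ∧ ∀ v : HeightOneSpectrum (𝓞 K), v ∉ S₀ →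
        (D : 𝓞 K) ∉ v.asIdeal → IsSquare (v.valuation K u)} := by
    intro x y hy h
    have hK : (D : K) * (y : K) ^ 2 = (x : K) ^ 3 + (a : K) * x + (b : K) := by exact_mod_cast h
    have hyK : (y : K) ≠ 0 := by exact_mod_cast hy
    have hfac : (D : K) * (y : K) ^ 2 = ((x : K) - θ) * (((x : K) - θ) ^ 2 +
        (3 * θ) * ((x : K) - θ) + δ) := by
      rw [hδ]; linear_combination hK + hθ
    have hne : (x : K) - θ ≠ 0 := by
      intro h0
      rw [h0, zero_mul] at hfac
      exact mul_ne_zero hDK (pow_ne_zero 2 hyK) hfac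
    refine ⟨mul_ne_zero hDK hne, fun v hv hDv => ?_⟩
    rw [hS₀, Set.mem_union, not_or] at hv
    obtain ⟨hv1, hv2⟩ := hv
    refine val_square _ _ _ y (3 * θ) δ ?_ ?_ ?_ hne hfac
    · have := (HeightOneSpectrum.valuation_eq_one_iff_notMem (K := K) v (r := (D : 𝓞 K))).mpr hDv
      simpa using this
    · exact not_lt.mp hv1
    · exact not_not.mp hv2
  intro x₁ y₁ x₂ y₂ hy₁ hy₂ h₁ h₂ hk
  obtain ⟨w, hw⟩ := hκ _ (key x₁ y₁ hy₁ h₁) _ (key x₂ y₂ hy₂ h₂) hk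
  refine ⟨w / D, ?_⟩
  field_simp
  linear_combination hw

/-- a polynomial which is a square modulo every irreducible factor of a squarefree `f` is a
square modulo `f` -/
theorem crt_sq (f g : ℚ[X]) (hf : Squarefree f)
    (h : ∀ q : ℚ[X], Irreducible q → q ∣ f → ∃ z, q ∣ g - z ^ 2) : ∃ z, f ∣ g - z ^ 2 := by
  induction f using UniqueFactorizationMonoid.induction_on_prime with
  | h₁ => exact absurd hf not_squarefree_zero
  | h₂ x hx => exact ⟨0, hx.dvd⟩
  | h₃ x q hx0 hq ih =>
    obtain ⟨z₁, h₁⟩ := h q hq.irreducible (dvd_mul_right _ _)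
    obtain ⟨z₂, h₂⟩ := ih (hf.of_mul_right) fun r hr hrx => h r hr (hrx.mul_left _)
    have hcop : IsCoprime q x := by
      rw [hq.irreducible.coprime_iff_not_dvd]
      rintro ⟨c, rfl⟩
      exact hq.not_isUnit (hf q ⟨c, by ring⟩)
    obtain ⟨u, v, huv⟩ := id hcop
    refine ⟨z₂ * (u * q) + z₁ * (v * x), hcop.mul_dvd ?_ ?_⟩
    · obtain ⟨c, hc⟩ := h₁
      refine ⟨c - (z₂ * u - z₁ * u) * (z₂ * (u * q) + z₁ * (v * x) + z₁), ?_⟩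
      linear_combination hc - z₁ * (z₂ * (u * q) + z₁ * (v * x) + z₁) * huv
    · obtain ⟨c, hc⟩ := h₂
      refine ⟨c - (z₁ * v - z₂ * v) * (z₂ * (u * q) + z₁ * (v * x) + z₂), ?_⟩
      linear_combination hc - z₂ * (z₂ * (u * q) + z₁ * (v * x) + z₂) * huv

end APTwist

end

section
namespace APTwist

open Polynomial WeierstrassCurve WeierstrassCurve.Affine

theorem halve {a b : ℚ} (hab : 4 * a ^ 3 + 27 * b ^ 2 ≠ 0) {D : ℤ} (hD : D ≠ 0) {X₀ Y₀ : ℚ}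
    (h₀ : (TW a b D).Nonsingular X₀ Y₀) (z0 z1 z2 : ℚ)
    (E2 : z1 ^ 2 + 2 * z0 * z2 = a * z2 ^ 2)
    (E1 : D + 2 * z0 * z1 = 2 * a * z1 * z2 + b * z2 ^ 2)
    (E0 : X₀ = z0 ^ 2 - 2 * z1 * z2 * b) :
    ∃ R : (TW a b D).Point, Point.some X₀ Y₀ h₀ = R + R := by
  have hDQ : (D : ℚ) ≠ 0 := by exact_mod_cast hD
  have hz2 : z2 ≠ 0 := by
    rintro rfl
    have : z1 = 0 := by
      have : z1 ^ 2 = 0 := by linear_combination E2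
      exact pow_eq_zero_iff (two_ne_zero) |>.mp this
    subst this
    apply hDQ; linear_combination E1
  set t := z1 / z2 with ht
  have hz1 : z1 = t * z2 := by rw [ht]; field_simp
  set w := z0 / z2 with hw
  have hz0 : z0 = w * z2 := by rw [hw]; field_simp
  clear_value t w
  subst hz1 hz0
  have F2 : t ^ 2 + 2 * w = a := by
    have : z2 ^ 2 * (t ^ 2 + 2 * w - a) = 0 := by linear_combination E2
    rcases mul_eq_zero.mp this with h | h
    · exact absurd h (pow_ne_zero 2 hz2)
    · linear_combination h
  have hDe : (D : ℚ) = z2 ^ 2 * (t ^ 3 + a * t + b) := by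
    linear_combination E1 - z2 ^ 2 * t * F2
  -- the half point is `(D t, D ^ 2 s)`
  obtain ⟨s, hs⟩ : ∃ s, s = z2⁻¹ := ⟨_, rfl⟩
  have hsz : s * z2 = 1 := by rw [hs]; field_simp
  have hs0 : s ≠ 0 := by rintro h; rw [h] at hsz; simp at hsz
  have hcurve : (D : ℚ) * s ^ 2 = t ^ 3 + a * t + b := by
    rw [hDe]; linear_combination (s * z2 + 1) * (t ^ 3 + a * t + b) * hsz
  have hR : (TW a b D).Nonsingular (D * t) (D ^ 2 * s) := by
    apply (tw_nonsing hab hD).mpr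
    linear_combination (D : ℚ) ^ 3 * hcurve
  have hY : (D : ℚ) ^ 2 * s ≠ 0 := mul_ne_zero (pow_ne_zero 2 hDQ) hs0
  have hX : ((3 * ((D : ℚ) * t) ^ 2 + a * D ^ 2) / (2 * ((D : ℚ) ^ 2 * s))) ^ 2
      - D * t - D * t = X₀ := by
    have e1 : (3 * ((D : ℚ) * t) ^ 2 + a * D ^ 2) / (2 * ((D : ℚ) ^ 2 * s)) =
      (2 * t ^ 2 + w) * z2 := by
      rw [← F2]
      field_simp
      linear_combination -(2 * t ^ 2 + w) * 2 * hsz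
    rw [e1, E0, hDe, ← F2]
    ring
  obtain ⟨Y, h3, e⟩ : ∃ Y h3, (Point.some _ _ hR + Point.some _ _ hR : (TW a b D).Point) =
      Point.some X₀ Y h3 := by
    obtain ⟨h3, e⟩ := tw_double hR hY
    rw [e]
    rw [hX] at h3
    exact ⟨_, h3, by simp only [Point.some.injEq]; exact ⟨hX, by rw [hX]⟩⟩
  have q1 := (tw_nonsing hab hD).mp h₀
  have q2 := (tw_nonsing hab hD).mp h3
  have : Y₀ ^ 2 = Y ^ 2 := by rw [q1, q2]
  rcases sq_eq_sq_iff_eq_or_eq_neg.mp this with h | h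
  · subst h; exact ⟨_, e.symm⟩
  · subst h
    obtain ⟨h4, e4⟩ := tw_neg h3
    refine ⟨-Point.some _ _ hR, ?_⟩
    rw [← neg_add, e, e4]

/-- `X ^ 3 + a X + b` -/
noncomputable def cub (a b : ℚ) : ℚ[X] := X ^ 3 + C a * X + C b

theorem cub_deg (a b : ℚ) : (cub a b).natDegree = 3 := by
  unfold cub; compute_degree!

theorem cub_monic (a b : ℚ) : (cub a b).Monic := by
  unfold cub; monicity!

theorem cub_eval (a b x : ℚ) : (cub a b).eval x = x ^ 3 + a * x + b := by
  simp [cub]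

theorem cub_squarefree (a b : ℚ) (hab : 4 * a ^ 3 + 27 * b ^ 2 ≠ 0) : Squarefree (cub a b) := by
  apply Polynomial.Separable.squarefree
  refine ⟨C (18 * a / (4 * a ^ 3 + 27 * b ^ 2)) * X * 0 + C (-18 * a / (4 * a ^ 3 + 27 * b ^ 2)) * X +
    C (27 * b / (4 * a ^ 3 + 27 * b ^ 2)),
    C (6 * a / (4 * a ^ 3 + 27 * b ^ 2)) * X ^ 2 + C (-9 * b / (4 * a ^ 3 + 27 * b ^ 2)) * X +
    C (4 * a ^ 2 / (4 * a ^ 3 + 27 * b ^ 2)), ?_⟩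
  set d := 4 * a ^ 3 + 27 * b ^ 2 with hd
  have hdd : derivative (cub a b) = 3 * X ^ 2 + C a := by
    simp [cub]
    rw [map_ofNat]; norm_num
  have h1 : (1 : ℚ[X]) = C d⁻¹ * C d := by rw [← C_mul, inv_mul_cancel₀ hab, C_1]
  rw [hdd, h1, hd]
  simp only [cub, div_eq_mul_inv, C_mul, C_add, C_pow, C_neg, map_ofNat]
  ring

/-- Reduce a square root modulo the cubic and compare coefficients. -/
theorem coeffs {a b D x₀ : ℚ} (z : ℚ[X]) (h : cub a b ∣ C D * (C x₀ - X) - z ^ 2) :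
    ∃ z0 z1 z2 : ℚ, z1 ^ 2 + 2 * z0 * z2 = a * z2 ^ 2 ∧
      D + 2 * z0 * z1 = 2 * a * z1 * z2 + b * z2 ^ 2 ∧ D * x₀ = z0 ^ 2 - 2 * z1 * z2 * b := by
  set r := z %ₘ cub a b with hr
  have hzr : z = r + cub a b * (z /ₘ cub a b) := (modByMonic_add_div z (cub a b)).symm
  have hrd : r.natDegree < 3 := by
    rw [← cub_deg a b]
    apply natDegree_modByMonic_lt _ (cub_monic a b)
    intro h1
    have := cub_deg a b
    rw [h1] at this
    simp at this
  have hd2 : cub a b ∣ C D * (C x₀ - X) - r ^ 2 := by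
    obtain ⟨c, hc⟩ := h
    refine ⟨c + (z /ₘ cub a b) * (z + r), ?_⟩
    linear_combination hc + (z + r) * hzr
  have hr3 : r = C (r.coeff 0) + C (r.coeff 1) * X + C (r.coeff 2) * X ^ 2 := by
    conv_lhs => rw [r.as_sum_range' 3 hrd]
    simp [Finset.sum_range_succ, ← C_mul_X_pow_eq_monomial]
  set z0 := r.coeff 0
  set z1 := r.coeff 1
  set z2 := r.coeff 2
  refine ⟨z0, z1, z2, ?_⟩
  -- subtract the quotient
  have hd3 : cub a b ∣ C (D * x₀ - z0 ^ 2 + 2 * z1 * z2 * b) +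
      C (2 * a * z1 * z2 + b * z2 ^ 2 - D - 2 * z0 * z1) * X +
      C (a * z2 ^ 2 - z1 ^ 2 - 2 * z0 * z2) * X ^ 2 := by
    obtain ⟨c, hc⟩ := hd2
    refine ⟨c + C (z2 ^ 2) * X + C (2 * z1 * z2), ?_⟩
    rw [mul_add, mul_add, ← hc, hr3]
    simp only [cub, C_mul, C_add, C_sub, C_pow, map_ofNat]
    ring
  have h0 := Polynomial.eq_zero_of_dvd_of_natDegree_lt hd3 (by
    rw [cub_deg]
    refine lt_of_le_of_lt (b := 2) ?_ (by norm_num)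
    compute_degree)
  have hc : ∀ p q r : ℚ, C p + C q * X + C r * X ^ 2 = (0 : ℚ[X]) → p = 0 ∧ q = 0 ∧ r = 0 := by
    intro p q r h
    have c0 := congrArg (fun p => coeff p 0) h
    have c1 := congrArg (fun p => coeff p 1) h
    have c2 := congrArg (fun p => coeff p 2) h
    simp [coeff_X, coeff_C] at c0 c1 c2
    exact ⟨c0, c1, c2⟩
  obtain ⟨c0, c1, c2⟩ := hc _ _ _ h0
  refine ⟨by linear_combination -c2, by linear_combination -c1, by linear_combination c0⟩

end APTwist

end

section
namespace APTwist

open Polynomial WeierstrassCurve WeierstrassCurve.Affine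

theorem scaled_eq {a b : ℚ} (hab : 4 * a ^ 3 + 27 * b ^ 2 ≠ 0) {D : ℤ} (hD : D ≠ 0) {X Y : ℚ}
    (h : (TW a b D).Nonsingular X Y) :
    (D : ℚ) * (Y / D ^ 2) ^ 2 = (X / D) ^ 3 + a * (X / D) + b := by
  have hDQ : (D : ℚ) ≠ 0 := by exact_mod_cast hD
  have := (tw_nonsing hab hD).mp h
  field_simp
  linear_combination this

theorem line_id {a b D x₁ y₁ x₂ y₂ l : ℚ} (hx : x₁ ≠ x₂) (hl : l * (x₁ - x₂) = y₁ + y₂)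
    (h₁ : D * y₁ ^ 2 = x₁ ^ 3 + a * x₁ + b) (h₂ : D * y₂ ^ 2 = x₂ ^ 3 + a * x₂ + b) :
    (C x₁ - X) * (C x₂ - X) * (C (D * l ^ 2 - x₁ - x₂) - X) =
      C D * (C y₁ + C l * (X - C x₁)) ^ 2 - cub a b := by
  have hy : y₂ = l * (x₁ - x₂) - y₁ := by linear_combination -hl
  subst hy
  have ha : a = 2 * D * l * (y₁ - l * x₁) + x₁ * x₂ + (x₁ + x₂) * (D * l ^ 2 - x₁ - x₂) := by
    have : (x₁ - x₂) * (a - (2 * D * l * (y₁ - l * x₁) + x₁ * x₂ +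
        (x₁ + x₂) * (D * l ^ 2 - x₁ - x₂))) = 0 := by linear_combination h₂ - h₁
    rcases mul_eq_zero.mp this with h | h
    · exact absurd (sub_eq_zero.mp h) hx
    · linear_combination h
  have hb : b = D * y₁ ^ 2 - x₁ ^ 3 - a * x₁ := by linear_combination -h₁
  rw [hb, ha]
  simp only [cub, C_mul, C_add, C_sub, C_pow, map_ofNat]
  ring

theorem cub_coprime {a b x : ℚ} (h : x ^ 3 + a * x + b ≠ 0) : IsCoprime (cub a b) (C x - X) := by
  obtain ⟨g, hg⟩ := X_sub_C_dvd_sub_C_eval (a := x) (p := cub a b)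
  rw [cub_eval] at hg
  set e := x ^ 3 + a * x + b
  have he : C e⁻¹ * C e = (1 : ℚ[X]) := by rw [← C_mul, inv_mul_cancel₀ h, C_1]
  exact ⟨C e⁻¹, C e⁻¹ * g, by linear_combination C e⁻¹ * hg + he⟩

theorem same_class {a b : ℚ} (hab : 4 * a ^ 3 + 27 * b ^ 2 ≠ 0) {D : ℤ} (hD : D ≠ 0)
    {X₁ Y₁ X₂ Y₂ : ℚ} (h₁ : (TW a b D).Nonsingular X₁ Y₁) (h₂ : (TW a b D).Nonsingular X₂ Y₂)
    (hY₁ : Y₁ ≠ 0) (hY₂ : Y₂ ≠ 0) (hX : X₁ ≠ X₂)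
    (hsq : ∀ q : ℚ[X], Irreducible q → q ∣ cub a b →
      ∃ z, q ∣ (C (X₁ / D) - X) * (C (X₂ / D) - X) - z ^ 2) :
    ∃ R : (TW a b D).Point, Point.some X₁ Y₁ h₁ - Point.some X₂ Y₂ h₂ = R + R := by
  have hDQ : (D : ℚ) ≠ 0 := by exact_mod_cast hD
  obtain ⟨h₂', e₂⟩ := tw_neg h₂
  obtain ⟨h₃, e₃⟩ := tw_add_of_X_ne h₁ h₂' hX
  rw [sub_eq_add_neg, e₂, e₃]
  obtain ⟨w, c, hc⟩ := crt_sq _ _ (cub_squarefree a b hab) hsq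
  have q₁ := scaled_eq hab hD h₁
  have q₂ := scaled_eq hab hD h₂
  have hXs : X₁ - X₂ ≠ 0 := sub_ne_zero.mpr hX
  have hl : (Y₁ - -Y₂) / (X₁ - X₂) / D * (X₁ / D - X₂ / D) = Y₁ / D ^ 2 + Y₂ / D ^ 2 := by
    field_simp; ring
  have hline := line_id (fun h => hX ((div_left_inj' hDQ).mp h)) hl q₁ q₂
  have hX3 : ((Y₁ - -Y₂) / (X₁ - X₂)) ^ 2 - X₁ - X₂ =
      D * (D * ((Y₁ - -Y₂) / (X₁ - X₂) / D) ^ 2 - X₁ / D - X₂ / D) := by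
    field_simp
  set x₁ := X₁ / D
  set x₂ := X₂ / D
  set x₃ := D * ((Y₁ - -Y₂) / (X₁ - X₂) / D) ^ 2 - x₁ - x₂
  set L : ℚ[X] := C (Y₁ / D ^ 2) + C ((Y₁ - -Y₂) / (X₁ - X₂) / D) * (X - C x₁)
  have n₁ : x₁ ^ 3 + a * x₁ + b ≠ 0 := by
    rw [← q₁]; exact mul_ne_zero hDQ (pow_ne_zero 2 (div_ne_zero hY₁ (pow_ne_zero 2 hDQ)))
  have n₂ : x₂ ^ 3 + a * x₂ + b ≠ 0 := by
    rw [← q₂]; exact mul_ne_zero hDQ (pow_ne_zero 2 (div_ne_zero hY₂ (pow_ne_zero 2 hDQ)))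
  have hcop : IsCoprime (cub a b) w := by
    have h := (cub_coprime n₁).mul_right (cub_coprime n₂)
    have h' : (C x₁ - X) * (C x₂ - X) = w ^ 2 + cub a b * c := by linear_combination hc
    rw [h'] at h
    exact (IsCoprime.pow_right_iff (by norm_num)).mp (IsCoprime.add_mul_left_right_iff.mp h)
  obtain ⟨u, v, huv⟩ := hcop
  have hdvd : cub a b ∣ C (D : ℚ) * (C x₃ - X) - (C (D : ℚ) * L * v) ^ 2 := by
    refine ⟨C (D : ℚ) * (C x₃ - X) * u * (1 + v * w) - C (D : ℚ) * (C x₃ - X) * v ^ 2 * c -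
      C (D : ℚ) * v ^ 2, ?_⟩
    linear_combination (-C (D : ℚ) * (C x₃ - X) * (1 + v * w)) * huv +
      C (D : ℚ) * v ^ 2 * hline - C (D : ℚ) * (C x₃ - X) * v ^ 2 * hc
  obtain ⟨z0, z1, z2, E2, E1, E0⟩ := coeffs _ hdvd
  exact halve hab hD h₃ z0 z1 z2 E2 E1 (by rw [hX3, E0])

end APTwist

end

section
namespace APTwist

open Polynomial WeierstrassCurve WeierstrassCurve.Affine

theorem factor_map (a b : ℚ) (hab : 4 * a ^ 3 + 27 * b ^ 2 ≠ 0) (q : ℚ[X]) (hq : Irreducible q)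
    (hqf : q ∣ cub a b) :
    ∃ N : ℕ, 1 ≤ N ∧ ∀ D : ℤ, D ≠ 0 → ∃ M : ℕ, M ≤ N ^ (D.natAbs.primeFactors.card + 1) ∧
      ∃ κ : ℚ → Fin M, ∀ x₁ y₁ x₂ y₂ : ℚ, y₁ ≠ 0 → y₂ ≠ 0 →
        D * y₁ ^ 2 = x₁ ^ 3 + a * x₁ + b → D * y₂ ^ 2 = x₂ ^ 3 + a * x₂ + b →
        κ x₁ = κ x₂ → ∃ z, q ∣ (C x₁ - X) * (C x₂ - X) - z ^ 2 := by
  have hfact : Fact (Irreducible q) := ⟨hq⟩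
  have hC : ∀ r : ℚ, AdjoinRoot.mk q (C r) = (r : AdjoinRoot q) := fun r => by
    rw [AdjoinRoot.mk_C]; exact eq_ratCast _ _
  have hθ : (AdjoinRoot.root q) ^ 3 + (a : AdjoinRoot q) * AdjoinRoot.root q +
      (b : AdjoinRoot q) = 0 := by
    have := AdjoinRoot.mk_eq_zero.mpr hqf
    rw [cub, map_add, map_add, map_mul, map_pow, hC, hC, AdjoinRoot.mk_X] at this
    exact this
  obtain ⟨N, hN, h⟩ := selmer_map (AdjoinRoot q) a b hab (AdjoinRoot.root q) hθ
  refine ⟨N, hN, fun D hD => ?_⟩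
  obtain ⟨M, hM, κ, hκ⟩ := h D hD
  refine ⟨M, hM, κ, fun x₁ y₁ x₂ y₂ hy₁ hy₂ h₁ h₂ hk => ?_⟩
  obtain ⟨s, hs⟩ := hκ x₁ y₁ x₂ y₂ hy₁ hy₂ h₁ h₂ hk
  obtain ⟨z, rfl⟩ := AdjoinRoot.mk_surjective s
  refine ⟨z, AdjoinRoot.mk_eq_mk.mp ?_⟩
  rw [map_mul, map_sub, map_sub, hC, hC, AdjoinRoot.mk_X, hs, map_pow, sq]

theorem descent (a b : ℚ) (hab : 4 * a ^ 3 + 27 * b ^ 2 ≠ 0) :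
    ∃ N : ℕ, 1 ≤ N ∧ ∀ D : ℤ, D ≠ 0 → ∃ M : ℕ, M ≤ N ^ (D.natAbs.primeFactors.card + 1) ∧
      ∃ κ : (TW a b D).Point → Fin M, ∀ P Q, κ P = κ Q → ∃ R, P - Q = R + R := by
  classical
  have hf0 : cub a b ≠ 0 := (cub_monic a b).ne_zero
  let ι := {q : ℚ[X] // q ∈ (UniqueFactorizationMonoid.normalizedFactors (cub a b)).toFinset}
  have hι : ∀ q : ι, Irreducible q.1 ∧ q.1 ∣ cub a b := fun q => by
    have := Multiset.mem_toFinset.mp q.2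
    exact ⟨UniqueFactorizationMonoid.irreducible_of_normalized_factor _ this,
      UniqueFactorizationMonoid.dvd_of_mem_normalizedFactors this⟩
  choose N hN h using fun q : ι => factor_map a b hab q.1 (hι q).1 (hι q).2
  refine ⟨4 + ∏ q, N q, by omega, fun D hD => ?_⟩
  have hDQ : (D : ℚ) ≠ 0 := by exact_mod_cast hD
  choose M hM κ hκ using fun q : ι => h q D hD
  let T := Option ({x : ℚ // x ∈ (cub a b).roots.toFinset} ⊕ (∀ q : ι, Fin (M q)))
  let k : (TW a b D).Point → T := fun P => match P with
    | .zero => none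
    | .some X Y _ => if hY : X / D ∈ (cub a b).roots.toFinset then some (Sum.inl ⟨X / D, hY⟩) else
      some (Sum.inr fun q => κ q (X / D))
  refine ⟨Fintype.card T, ?_, fun P => Fintype.equivFin T (k P), ?_⟩
  · have hcard : Fintype.card T ≤ 4 + ∏ q, M q := by
      have h3 : (cub a b).roots.toFinset.card ≤ 3 :=
        (Multiset.toFinset_card_le _).trans ((card_roots' _).trans (cub_deg a b).le)
      rw [Fintype.card_option, Fintype.card_sum, Fintype.card_pi, Fintype.card_coe]
      simp only [Fintype.card_fin]
      omega
    refine hcard.trans ?_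
    set n := D.natAbs.primeFactors.card + 1 with hn
    calc 4 + ∏ q, M q ≤ 4 ^ n + (∏ q, N q) ^ n := by
          rw [← Finset.prod_pow]
          exact Nat.add_le_add (Nat.le_self_pow (by omega) _)
            (Finset.prod_le_prod' fun q _ => hM q)
      _ ≤ (4 + ∏ q, N q) ^ n := pow_add_pow_le (by omega) (by omega) (by omega)
  · intro P Q hPQ
    have hk : k P = k Q := (Fintype.equivFin T).injective hPQ
    have hroot : ∀ X Y, (TW a b D).Nonsingular X Y →
        (X / D ∈ (cub a b).roots.toFinset ↔ Y = 0) := by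
      intro X Y hXY
      have e := scaled_eq hab hD hXY
      rw [Multiset.mem_toFinset, mem_roots hf0, IsRoot, cub_eval, ← e]
      simp [hDQ]
    rcases P with _ | ⟨X₁, Y₁, h₁⟩ <;> rcases Q with _ | ⟨X₂, Y₂, h₂⟩
    · exact ⟨0, by simp⟩
    · exfalso
      simp only [k] at hk
      split_ifs at hk
    · exfalso
      simp only [k] at hk
      split_ifs at hk
    · simp only [k] at hk
      split_ifs at hk with g₁ g₂ g₂
      · have hk := congrArg Subtype.val (Sum.inl.inj (Option.some.inj hk))
        have hX : X₁ = X₂ := (div_left_inj' hDQ).mp hk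
        have e1 := (hroot _ _ h₁).mp g₁
        have e2 := (hroot _ _ h₂).mp g₂
        subst hX e1 e2
        exact ⟨0, by simp⟩
      · exact absurd (Option.some.inj hk) Sum.inl_ne_inr
      · exact absurd (Option.some.inj hk) Sum.inr_ne_inl
      · have hk := Sum.inr.inj (Option.some.inj hk)
        rw [hroot _ _ h₁] at g₁
        rw [hroot _ _ h₂] at g₂
        by_cases hX : X₁ = X₂
        · subst hX
          have r₁ := (tw_nonsing hab hD).mp h₁
          have r₂ := (tw_nonsing hab hD).mp h₂
          rcases sq_eq_sq_iff_eq_or_eq_neg.mp (r₁.trans r₂.symm) with hy | hy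
          · subst hy; exact ⟨0, by simp⟩
          · subst hy
            obtain ⟨h', e'⟩ := tw_neg h₂
            refine ⟨-Point.some X₁ Y₂ h₂, ?_⟩
            rw [e', ← e', sub_eq_add_neg]
        · apply same_class hab hD h₁ h₂ g₁ g₂ hX
          intro q hq hqf
          obtain ⟨q', hq', hass⟩ :=
            UniqueFactorizationMonoid.exists_mem_normalizedFactors_of_dvd hf0 hq hqf
          let i : ι := ⟨q', Multiset.mem_toFinset.mpr hq'⟩
          obtain ⟨z, hz⟩ := hκ i _ _ _ _ (div_ne_zero g₁ (pow_ne_zero 2 hDQ))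
            (div_ne_zero g₂ (pow_ne_zero 2 hDQ)) (scaled_eq hab hD h₁) (scaled_eq hab hD h₂)
            (congrFun hk i)
          exact ⟨z, hass.dvd.trans hz⟩

end APTwist

end

section
namespace APTwist

open WeierstrassCurve WeierstrassCurve.Affine

theorem main (a b : ℚ) (hab : 4 * a ^ 3 + 27 * b ^ 2 ≠ 0) :
    ∃ C : ℝ, 1 < C ∧
      ∀ D : ℤ, D ≠ 0 →
        ∀ (N : ℕ) (x y : Fin N → ℚ),
          (∀ i, (quadTwist a b D).toAffine.Nonsingular (x i) (y i)) →
          (IsNontrivAP x ∨ IsNontrivAP y) →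
          (N : ℝ) ≤ C ^ (D.natAbs.primeFactors.card + 1) := by
  obtain ⟨c1, hpar⟩ := th_par a b hab
  obtain ⟨c2, hc2, hH1⟩ := H1 a b
  obtain ⟨c3, hc3, hH2⟩ := H2 a b
  obtain ⟨C1, hC1, hdesc⟩ := descent a b hab
  set c := max 12 (max c1 (max c2 c3)) with hc
  have l0 : 12 ≤ c := le_max_left _ _
  have l1 : c1 ≤ c := (le_max_left _ _).trans (le_max_right _ _)
  have l2 : c2 ≤ c := (le_max_left _ _).trans ((le_max_right _ _).trans (le_max_right _ _))
  have l3 : c3 ≤ c := (le_max_right _ _).trans ((le_max_right _ _).trans (le_max_right _ _))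
  obtain ⟨C, hC, k, habs⟩ := abstract_approx c (by linarith)
  have hC1' : (1 : ℝ) ≤ C1 := by exact_mod_cast hC1
  have hck : (1 : ℝ) ≤ (C1 : ℝ) ^ k := one_le_pow₀ hC1'
  refine ⟨C * (C1 : ℝ) ^ k + 1, by nlinarith, fun D hD N x y h hAP => ?_⟩
  obtain ⟨M, hM, κ, hκ⟩ := hdesc D hD
  let P : Fin N → (TW a b D).Point := fun i => Point.some (x i) (y i) (h i)
  have hinj : Function.Injective P := by
    intro i j hij
    simp only [P, Point.some.injEq] at hij
    rcases hAP with hx | hy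
    · exact ap_inj hx hij.1
    · exact ap_inj hy hij.2
  have hlog : 0 ≤ Real.log N + 1 := by
    have := Real.log_natCast_nonneg N; linarith
  have hN := habs (TW a b D).Point th M κ th_nonneg
    (fun P Q => (hpar D hD P Q).trans l1)
    (fun B => (th_count hD (max B 0) (le_max_right _ _)).1.subset
      fun P hP => by
        simp only [Set.mem_ofPred_eq] at hP ⊢
        exact le_trans hP (le_max_left _ _))
    (fun B hB => (th_count hD B hB).2.trans (by gcongr)) hκ N P hinj
    (fun i j k hij hjk hik => (hH1 D hD N x y h hAP i j k hij hjk hik).trans (by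
      apply mul_le_mul_of_nonneg_right l2
      have := th_nonneg (P i); have := th_nonneg (P j); positivity))
    (fun i j k hij hjk hik => (hH2 D hD N x y h hAP hinj i j k hij hjk hik).trans (by
      apply mul_le_mul_of_nonneg_right l3
      have := th_nonneg (P j - P i); have := th_nonneg (P k - P i); positivity))
  refine hN.trans ?_
  set n := D.natAbs.primeFactors.card + 1 with hn
  have hM' : (M : ℝ) ≤ (C1 : ℝ) ^ n := by exact_mod_cast hM
  calc C * (M : ℝ) ^ k ≤ C ^ n * ((C1 : ℝ) ^ n) ^ k := by
        gcongr
        exact le_self_pow₀ hC (by omega)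
    _ = (C * (C1 : ℝ) ^ k) ^ n := by rw [mul_pow, ← pow_mul, ← pow_mul, mul_comm n k]
    _ ≤ _ := by gcongr; linarith

end APTwist

end

/-- For an elliptic curve `E : y² = x³ + ax + b` over `ℚ` there is a constant `C > 1` such
that for every squarefree nonzero integer `D`, any non-trivial arithmetic progression of
length `N` in the `x`-coordinates (or `y`-coordinates) of rational points of the quadratic
twist `E^(D)` satisfies `N ≤ C^(ω(D)+1)`. -/
theorem AP_length_le_of_quadTwist (a b : ℚ) (hab : 4 * a ^ 3 + 27 * b ^ 2 ≠ 0) :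
    ∃ C : ℝ, 1 < C ∧
      ∀ D : ℤ, D ≠ 0 → Squarefree D →
        ∀ (N : ℕ) (x y : Fin N → ℚ),
          (∀ i, (quadTwist a b D).toAffine.Nonsingular (x i) (y i)) →
          (IsNontrivAP x ∨ IsNontrivAP y) →
          (N : ℝ) ≤ C ^ (D.natAbs.primeFactors.card + 1) := by
  obtain ⟨C, hC, h⟩ := APTwist.main a b hab
  exact ⟨C, hC, fun D hD _ => h D hD⟩
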